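/- arXiv:2002.06825 — 3 statements merged into one kernel-verified Lean document; each statement's English description precedes it below -/
import Mathlib

section
/- Let X and Y be disjoint subsets of the node set V of a maxPDAG G. If (i) Y ⊆ possde(X,G) and (ii) there exists a set Z ⊆ V \ (X ∪ Y) that is a valid adjustment set relative to (X,Y) in G (generalised adjustment criterion), then the O-set O(X,Y,G) = pa(cn(X,Y,G),G) \ forb(X,Y,G) is a valid adjustment set relative to (X,Y) in G. -/
/-! Framework for causal graphs: mixed graphs (directed, undirected, bi-directed edges),
paths as lists of typed steps, (possibly) directed paths, descendants, causal nodes,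
forbidden sets, (definite-status) blocking, valid adjustment sets, Meek's rules,
maxPDAGs, latent/forbidden projections, d-separation. -/

namespace Causal

universe u

variable {V : Type u}

/-- A mixed graph with directed, undirected and bi-directed edge relations. -/
structure MixedGraph (V : Type u) where
  dir : V → V → Prop
  undir : V → V → Prop
  bidir : V → V → Prop

/-- The kind of an edge as traversed along a path: forward directed (`a → b`),
backward directed (`a ← b`), undirected (`a − b`), or bi-directed (`a ↔ b`). -/
inductive EdgeKind : Type
  | fwd | bwd | und | bid
  deriving DecidableEq

/-- A step of a path: source node, kind of traversed edge, destination node. -/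
abbrev Step (V : Type u) := V × EdgeKind × V

namespace Step
def src (s : Step V) : V := s.1
def kind (s : Step V) : EdgeKind := s.2.1
def dst (s : Step V) : V := s.2.2
end Step

/-- The step `s` traverses an actual edge of `G`. Undirected and bi-directed
edge relations are used symmetrically. -/
def stepOK (G : MixedGraph V) (s : Step V) : Prop :=
  match Step.kind s with
  | EdgeKind.fwd => G.dir (Step.src s) (Step.dst s)
  | EdgeKind.bwd => G.dir (Step.dst s) (Step.src s)
  | EdgeKind.und => G.undir (Step.src s) (Step.dst s) ∨ G.undir (Step.dst s) (Step.src s)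
  | EdgeKind.bid => G.bidir (Step.src s) (Step.dst s) ∨ G.bidir (Step.dst s) (Step.src s)

/-- The sequence of nodes visited by a list of steps. -/
def pathNodes : List (Step V) → List V
  | [] => []
  | s :: rest => Step.src s :: (s :: rest).map Step.dst

/-- `p` is a path in `G`: a nonempty chain of valid steps visiting distinct nodes. -/
structure IsPath (G : MixedGraph V) (p : List (Step V)) : Prop where
  nonempty : p ≠ []
  valid : ∀ s ∈ p, stepOK G s
  chain : p.Chain' (fun s t => Step.dst s = Step.src t)
  nodup : (pathNodes p).Nodup

/-- The path starts at node `a`. -/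
def startsAt (p : List (Step V)) (a : V) : Prop := (pathNodes p).head? = some a

/-- The path ends at node `b`. -/
def endsAt (p : List (Step V)) (b : V) : Prop := (pathNodes p).getLast? = some b

/-- The non-endpoint (interior) nodes of the path. -/
def interiorNodes (p : List (Step V)) : List V := ((pathNodes p).drop 1).dropLast

/-- Consecutive pairs of steps of a path. -/
def stepPairs (p : List (Step V)) : List (Step V × Step V) := p.zip p.tail

/-- Does an edge of this kind have an arrowhead at the destination of its step? -/
def headAtDst : EdgeKind → Prop
  | EdgeKind.fwd => True | EdgeKind.bwd => False
  | EdgeKind.und => False | EdgeKind.bid => True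

/-- Does an edge of this kind have an arrowhead at the source of its step? -/
def headAtSrc : EdgeKind → Prop
  | EdgeKind.fwd => False | EdgeKind.bwd => True
  | EdgeKind.und => False | EdgeKind.bid => True

/-- `v` is a collider on the path `p`: both adjacent edges have an arrowhead at `v`. -/
def colliderAt (p : List (Step V)) (v : V) : Prop :=
  ∃ q ∈ stepPairs p, Step.dst q.1 = v ∧ headAtDst (Step.kind q.1) ∧ headAtSrc (Step.kind q.2)

/-- `v` is a non-endpoint non-collider on the path `p`. -/
def nonColliderAt (p : List (Step V)) (v : V) : Prop :=
  v ∈ interiorNodes p ∧ ¬ colliderAt p v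

/-- Two nodes are adjacent if they are joined by some edge. -/
def adjacent (G : MixedGraph V) (a b : V) : Prop :=
  G.dir a b ∨ G.dir b a ∨ G.undir a b ∨ G.undir b a ∨ G.bidir a b ∨ G.bidir b a

/-- `v` is a definite non-collider on `p`: at least one adjacent edge is directed
out of `v`, or both adjacent edges are undirected and the neighbours of `v` on `p`
are non-adjacent. -/
def defNonColliderAt (G : MixedGraph V) (p : List (Step V)) (v : V) : Prop :=
  ∃ q ∈ stepPairs p, Step.dst q.1 = v ∧
    (Step.kind q.1 = EdgeKind.bwd ∨ Step.kind q.2 = EdgeKind.fwd ∨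
      (Step.kind q.1 = EdgeKind.und ∧ Step.kind q.2 = EdgeKind.und ∧
        ¬ adjacent G (Step.src q.1) (Step.dst q.2)))

/-- Every non-endpoint node of `p` is a collider or a definite non-collider. -/
def definiteStatus (G : MixedGraph V) (p : List (Step V)) : Prop :=
  ∀ q ∈ stepPairs p,
    (headAtDst (Step.kind q.1) ∧ headAtSrc (Step.kind q.2)) ∨
    (Step.kind q.1 = EdgeKind.bwd ∨ Step.kind q.2 = EdgeKind.fwd ∨
      (Step.kind q.1 = EdgeKind.und ∧ Step.kind q.2 = EdgeKind.und ∧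
        ¬ adjacent G (Step.src q.1) (Step.dst q.2)))

/-- All steps of the path traverse directed edges forwards (a causal/directed path). -/
def allFwd (p : List (Step V)) : Prop := ∀ s ∈ p, Step.kind s = EdgeKind.fwd

/-- `p` is a directed (causal) path in `G` from `a` to `b`. -/
def directedPathFromTo (G : MixedGraph V) (p : List (Step V)) (a b : V) : Prop :=
  IsPath G p ∧ allFwd p ∧ startsAt p a ∧ endsAt p b

/-- `p` is possibly directed: every edge is undirected or traversed forwards, and
there are no indices `i < j` with a directed edge from the `j`-th to the `i`-th node. -/
def possiblyDirected (G : MixedGraph V) (p : List (Step V)) : Prop :=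
  (∀ s ∈ p, Step.kind s = EdgeKind.fwd ∨ Step.kind s = EdgeKind.und) ∧
  (pathNodes p).Pairwise (fun a b => ¬ G.dir b a)

/-- `b` is a descendant of `a`: `b = a` or a directed path from `a` to `b` exists. -/
def descendant (G : MixedGraph V) (a b : V) : Prop :=
  a = b ∨ ∃ p, directedPathFromTo G p a b

/-- The descendants of a node set. -/
def deSet (G : MixedGraph V) (A : Set V) : Set V := {b | ∃ a ∈ A, descendant G a b}

/-- `b` is a possible descendant of `a`. -/
def possDescendant (G : MixedGraph V) (a b : V) : Prop :=
  a = b ∨ ∃ p, IsPath G p ∧ possiblyDirected G p ∧ startsAt p a ∧ endsAt p b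

/-- The possible descendants of a node set. -/
def possdeSet (G : MixedGraph V) (A : Set V) : Set V := {b | ∃ a ∈ A, possDescendant G a b}

/-- `p` is a proper path from `X` to `Y`: only its first node lies in `X`. -/
def properFromTo (G : MixedGraph V) (p : List (Step V)) (X Y : Set V) : Prop :=
  IsPath G p ∧ (∃ a ∈ X, startsAt p a) ∧ (∃ b ∈ Y, endsAt p b) ∧
    ∀ v ∈ (pathNodes p).tail, v ∉ X

/-- The causal nodes: nodes on proper directed paths from `X` to `Y`, excluding `X`. -/
def cn (G : MixedGraph V) (X Y : Set V) : Set V :=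
  {v | v ∉ X ∧ ∃ p, properFromTo G p X Y ∧ allFwd p ∧ v ∈ pathNodes p}

/-- The possibly causal nodes: nodes on proper possibly directed paths from `X` to `Y`,
excluding `X`. -/
def posscn (G : MixedGraph V) (X Y : Set V) : Set V :=
  {v | v ∉ X ∧ ∃ p, properFromTo G p X Y ∧ possiblyDirected G p ∧ v ∈ pathNodes p}

/-- The forbidden set for DAG-like graphs: `de(cn(X,Y,G),G) ∪ X`. -/
def forbD (G : MixedGraph V) (X Y : Set V) : Set V := deSet G (cn G X Y) ∪ X

/-- The forbidden set for maxPDAGs: `possde(posscn(X,Y,G),G) ∪ X`. -/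
def forbP (G : MixedGraph V) (X Y : Set V) : Set V := possdeSet G (posscn G X Y) ∪ X

/-- Parents of a node set (via directed edges). -/
def paSet (G : MixedGraph V) (A : Set V) : Set V := {w | ∃ a ∈ A, G.dir w a}

/-- The O-set for DAG-like graphs: `pa(cn(X,Y,G),G) \ forb(X,Y,G)`. -/
def OsetD (G : MixedGraph V) (X Y : Set V) : Set V := paSet G (cn G X Y) \ forbD G X Y

/-- The O-set for maxPDAGs: `pa(cn(X,Y,G),G) \ forb(X,Y,G)`. -/
def OsetP (G : MixedGraph V) (X Y : Set V) : Set V := paSet G (cn G X Y) \ forbP G X Y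

/-- `v` is an ancestor (via directed paths) of some node of `C`. -/
def ancestorOfSome (G : MixedGraph V) (v : V) (C : Set V) : Prop :=
  ∃ c ∈ C, descendant G v c

/-- The path `p` is blocked by `C`: it contains a non-collider in `C` or a collider
that is not an ancestor of any node of `C`. -/
def blocked (G : MixedGraph V) (p : List (Step V)) (C : Set V) : Prop :=
  (∃ v ∈ C, nonColliderAt p v) ∨ (∃ v, colliderAt p v ∧ ¬ ancestorOfSome G v C)

/-- The definite-status path `p` is blocked by `C`: it contains a definite non-collider
in `C` or a collider that is not an ancestor of any node of `C`. -/
def blockedDef (G : MixedGraph V) (p : List (Step V)) (C : Set V) : Prop :=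
  (∃ v ∈ C, defNonColliderAt G p v) ∨ (∃ v, colliderAt p v ∧ ¬ ancestorOfSome G v C)

/-- Generalised adjustment criterion for DAGs/ADMGs: `Z` is disjoint from `X ∪ Y` and
from the forbidden set, and every proper non-causal path from `X` to `Y` is blocked. -/
def validAdjDAG (G : MixedGraph V) (X Y Z : Set V) : Prop :=
  Z ∩ (X ∪ Y) = ∅ ∧ Z ∩ forbD G X Y = ∅ ∧
  ∀ p, properFromTo G p X Y → ¬ allFwd p → blocked G p Z

/-- `G` is amenable relative to `(X,Y)`: every proper possibly directed path from `X`
to `Y` starts with a directed edge out of `X`. -/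
def amenable (G : MixedGraph V) (X Y : Set V) : Prop :=
  ∀ p, properFromTo G p X Y → possiblyDirected G p →
    ∃ s rest, p = s :: rest ∧ Step.kind s = EdgeKind.fwd

/-- Generalised adjustment criterion for maxPDAGs: `Z` is disjoint from `X ∪ Y`,
`G` is amenable relative to `(X,Y)`, `Z` avoids the forbidden set, and every proper
non-causal definite-status path from `X` to `Y` is blocked by `Z`. -/
def validAdjMax (G : MixedGraph V) (X Y Z : Set V) : Prop :=
  Z ∩ (X ∪ Y) = ∅ ∧ amenable G X Y ∧ Z ∩ forbP G X Y = ∅ ∧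
  ∀ p, properFromTo G p X Y → definiteStatus G p → ¬ possiblyDirected G p →
    blockedDef G p Z

/-- A PDAG: a simple graph with only directed and undirected edges and
no directed cycles. -/
structure IsPDAG (G : MixedGraph V) : Prop where
  no_bidir : ∀ a b, ¬ G.bidir a b
  undir_symm : ∀ a b, G.undir a b → G.undir b a
  dir_irrefl : ∀ a, ¬ G.dir a a
  undir_irrefl : ∀ a, ¬ G.undir a a
  simple_dd : ∀ a b, G.dir a b → ¬ G.dir b a
  simple_du : ∀ a b, G.dir a b → ¬ G.undir a b
  acyclic : ∀ a b, (∃ p, directedPathFromTo G p a b) → ¬ G.dir b a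

/-- A DAG: a PDAG without undirected edges. -/
structure IsDAG (G : MixedGraph V) extends IsPDAG G : Prop where
  no_undir : ∀ a b, ¬ G.undir a b

/-- A maximally oriented PDAG: a PDAG closed under Meek's rules R1–R4. -/
structure IsMaxPDAG (G : MixedGraph V) extends IsPDAG G : Prop where
  meek1 : ∀ a b c, G.dir a b → G.undir b c → ¬ adjacent G a c → G.dir b c
  meek2 : ∀ a b c, G.dir a b → G.dir b c → G.undir a c → G.dir a c
  meek3 : ∀ a b c d, G.undir a b → G.undir a c → G.undir a d → G.dir b d → G.dir c d →
      ¬ adjacent G b c → G.dir a d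
  meek4 : ∀ a b c d, G.undir a b → G.dir a c → G.undir b c → G.dir c d → G.undir b d →
      G.dir b d

/-- The first edge of the path has an arrowhead at the first node. -/
def startsWithArrowIn (p : List (Step V)) : Prop :=
  ∃ s rest, p = s :: rest ∧ headAtSrc (Step.kind s)

/-- The last edge of the path has an arrowhead at the last node. -/
def endsWithArrowIn (p : List (Step V)) : Prop :=
  ∃ s rest, p = rest ++ [s] ∧ headAtDst (Step.kind s)

/-- Projection of `G` over the node set `F`: the graph on the nodes outside `F` with
(i) a directed edge `a → b` iff `G` has a directed path from `a` to `b` with all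
non-endpoint nodes in `F`; (ii) a bi-directed edge `a ↔ b` iff `G` has a path with
at least one non-endpoint node, of the form `a ← ⋯ → b`, on which every non-endpoint
node is a non-collider and lies in `F`; (iii) an undirected edge `a − b` iff `G` has
the undirected edge `a − b`. -/
def forbProjection (G : MixedGraph V) (F : Set V) : MixedGraph V where
  dir a b := a ∉ F ∧ b ∉ F ∧
    ∃ p, directedPathFromTo G p a b ∧ ∀ v ∈ interiorNodes p, v ∈ F
  bidir a b := a ∉ F ∧ b ∉ F ∧
    ∃ p, IsPath G p ∧ startsAt p a ∧ endsAt p b ∧ interiorNodes p ≠ [] ∧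
      startsWithArrowIn p ∧ endsWithArrowIn p ∧
      ∀ v ∈ interiorNodes p, v ∈ F ∧ ¬ colliderAt p v
  undir a b := a ∉ F ∧ b ∉ F ∧ G.undir a b

/-- The forbidden projection of a DAG `D` with respect to `(X,Y)`:
the latent projection over `forb(X,Y,D) \ (X ∪ Y)`. -/
def dagProj (D : MixedGraph V) (X Y : Set V) : MixedGraph V :=
  forbProjection D (forbD D X Y \ (X ∪ Y))

/-- The forbidden projection of a maxPDAG `G` with respect to `(X,Y)`:
the projection over `forb(X,Y,G) \ (X ∪ Y)`. -/
def maxProj (G : MixedGraph V) (X Y : Set V) : MixedGraph V :=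
  forbProjection G (forbP G X Y \ (X ∪ Y))

/-- `A` and `B` are d-separated given `C` in `G`: every path between a node of `A`
and a node of `B` is blocked by `C`. -/
def dSep (G : MixedGraph V) (A B C : Set V) : Prop :=
  ∀ p a b, a ∈ A → b ∈ B → IsPath G p → startsAt p a → endsAt p b → blocked G p C

/-- A v-structure `a → b ← c` with `a`, `c` non-adjacent. -/
def vStructure (G : MixedGraph V) (a b c : V) : Prop :=
  a ≠ c ∧ G.dir a b ∧ G.dir c b ∧ ¬ adjacent G a c

/-- The DAG `D` is represented by the maxPDAG `G` (i.e. `D ∈ [G]`): `D` is a DAG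
with the same adjacencies and v-structures as `G`, and every directed edge of `G`
occurs in `D` with the same orientation. -/
def represents (G D : MixedGraph V) : Prop :=
  IsDAG D ∧ (∀ a b, adjacent G a b ↔ adjacent D a b) ∧
  (∀ a b c, vStructure G a b c ↔ vStructure D a b c) ∧
  (∀ a b, G.dir a b → D.dir a b)

/-- One step of the pruning procedure: remove from `Z` a node `z` such that `Y` is
d-separated from `z` given `{X} ∪ (Z \ {z})`. -/
def pruneStep (G : MixedGraph V) (X Y : V) (Z Z' : Set V) : Prop :=
  ∃ z ∈ Z, dSep G {Y} {z} ({X} ∪ (Z \ {z})) ∧ Z' = Z \ {z}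

/-- `Z'` is a possible result of the pruning procedure started at `Z`: it is reachable
by pruning steps and no further node can be removed. -/
def pruneResult (G : MixedGraph V) (X Y : V) (Z Z' : Set V) : Prop :=
  Relation.ReflTransGen (pruneStep G X Y) Z Z' ∧
  ∀ z ∈ Z', ¬ dSep G {Y} {z} ({X} ∪ (Z' \ {z}))

end Causal

namespace OSetAux

open Relation

universe v

variable {V : Type v}

/-- Abstract version of a maximally oriented PDAG (`d` directed, `n` undirected). -/
structure MP (d n : V → V → Prop) : Prop where
  acyc : ∀ a, ¬ TransGen d a a
  nsymm : ∀ a b, n a b → n b a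
  nirr : ∀ a, ¬ n a a
  excl : ∀ a b, d a b → ¬ n a b
  r1 : ∀ a b c, d a b → n b c → d a c ∨ d c a ∨ n a c
  r2 : ∀ a b c, d a b → d b c → ¬ n a c
  r4 : ∀ a b c e, n a b → d a c → n b c → d c e → n b e → False

/-- Adjacency. -/
def Adj (d n : V → V → Prop) (a b : V) : Prop := d a b ∨ d b a ∨ n a b

/-- Chordless possibly directed path from `a` to `b` with list of nodes `l`. -/
inductive IP (d n : V → V → Prop) : V → V → List V → Prop
  | nil (a : V) : IP d n a a [a]
  | cons {a c b : V} {l : List V} : (d a c ∨ n a c) → IP d n c b l →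
      (∀ e ∈ l, e ≠ c → e ≠ a ∧ ¬ Adj d n a e) → IP d n a b (a :: l)

section
variable {d n : V → V → Prop}

theorem MP.dirr (h : MP d n) (a : V) : ¬ d a a := fun k => h.acyc a (.single k)

theorem MP.asymm (h : MP d n) {a b : V} (k : d a b) : ¬ d b a :=
  fun k' => h.acyc a (.tail (.single k) k')

theorem MP.excl' (h : MP d n) {a b : V} (k : d a b) : ¬ n b a :=
  fun k' => h.excl _ _ k (h.nsymm _ _ k')

theorem MP.Dlem (h : MP d n) {a b : V} (k : TransGen d a b) : ¬ n a b := by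
  induction k with
  | single k => exact h.excl _ _ k
  | @tail c b k1 k2 ih =>
    intro hn
    rcases h.r1 _ _ _ k2 (h.nsymm _ _ hn) with k3 | k3 | k3
    · exact h.acyc _ (k1.tail k3)
    · exact h.r2 _ _ _ k3 k2 hn
    · exact ih (h.nsymm _ _ k3)

theorem MP.D2 (h : MP d n) {a b w : V} (k : TransGen d a b) : n b w → TransGen d a w ∨ n a w := by
  induction k with
  | single k =>
    intro hn
    rcases h.r1 _ _ _ k hn with k3 | k3 | k3
    · exact .inl (.single k3)
    · exact absurd (h.nsymm _ _ hn) (h.r2 _ _ _ k3 k)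
    · exact .inr k3
  | @tail c b k1 k2 ih =>
    intro hn
    rcases h.r1 _ _ _ k2 hn with k3 | k3 | k3
    · exact .inl (k1.tail k3)
    · exact absurd (h.nsymm _ _ hn) (h.r2 _ _ _ k3 k2)
    · exact ih k3

theorem IP.start_mem {a b : V} {l : List V} (p : IP d n a b l) : a ∈ l := by
  cases p <;> simp

theorem IP.end_mem {a b : V} {l : List V} (p : IP d n a b l) : b ∈ l := by
  induction p with
  | nil => simp
  | cons _ _ _ ih => simp [ih]

theorem IP.noback (h : MP d n) {a b : V} {l : List V} (p : IP d n a b l) :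
    ∀ e ∈ l, ¬ d e a := by
  cases p with
  | nil => intro e he; simp at he; subst he; exact h.dirr _
  | @cons _ c _ l hac q hq =>
    intro e he hd
    rcases List.mem_cons.1 he with rfl | he
    · exact h.dirr _ hd
    · by_cases hec : e = c
      · subst hec
        rcases hac with k | k
        · exact h.asymm k hd
        · exact h.excl' hd k
      · exact (hq e he hec).2 (.inr (.inl hd))

theorem IP.pre {a b : V} {l : List V} (p : IP d n a b l) :
    ∀ e ∈ l, ∃ l', l' ⊆ l ∧ IP d n a e l' := by
  induction p with
  | nil a => intro e he; simp at he; subst he; exact ⟨_, fun _ h => h, .nil _⟩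
  | @cons a c b l hac q hq ih =>
    intro e he
    rcases List.mem_cons.1 he with rfl | he
    · exact ⟨[e], by simp, .nil _⟩
    · obtain ⟨l', h1, h2⟩ := ih e he
      exact ⟨a :: l', List.cons_subset_cons _ h1, .cons hac h2 (fun e he => hq e (h1 he))⟩

theorem IP.suf {a b : V} {l : List V} (p : IP d n a b l) :
    ∀ e ∈ l, ∃ l', l' ⊆ l ∧ IP d n e b l' := by
  induction p with
  | nil a => intro e he; simp at he; subst he; exact ⟨_, fun _ h => h, .nil _⟩
  | @cons a c b l hac q hq ih =>
    intro e he
    rcases List.mem_cons.1 he with rfl | he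
    · exact ⟨_, fun _ h => h, .cons hac q hq⟩
    · obtain ⟨l', h1, h2⟩ := ih e he
      exact ⟨l', fun x hx => List.mem_cons_of_mem _ (h1 hx), h2⟩

theorem IP.dirAll (h : MP d n) {c b : V} {l : List V} (p : IP d n c b l) :
    ∀ a, d a c → (∀ e ∈ l, e ≠ c → ¬ Adj d n a e) → ReflTransGen d c b := by
  induction p with
  | nil => intros; exact .refl
  | @cons c f b l hcf q hq ih =>
    intro a hac hn
    have hcf' : d c f := by
      rcases hcf with k | k
      · exact k
      · exfalso
        have hne : f ≠ c := by rintro rfl; exact h.nirr _ k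
        exact hn f (List.mem_cons_of_mem _ q.start_mem) hne
          (h.r1 _ _ _ hac k)
    exact .head hcf' (ih c hcf' (fun e he hne => (hq e he hne).2))

theorem IP.consShort {c b : V} {l : List V} (p : IP d n c b l) :
    ∀ a, (∃ e ∈ l, Adj d n a e) → (∀ e ∈ l, ¬ d e a) → a ∉ l →
      ∃ l', l' ⊆ l ∧ IP d n a b (a :: l') := by
  induction p with
  | nil c =>
    rintro a ⟨e, he, hadj⟩ hnb ha
    simp at he ha; subst he
    refine ⟨[e], fun _ h => h, .cons (c := e) ?_ (.nil _) (by simp)⟩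
    rcases hadj with k | k | k
    · exact .inl k
    · exact absurd k (hnb e (by simp))
    · exact .inr k
  | @cons c f b l hcf q hq ih =>
    rintro a hex hnb ha
    by_cases hl : ∃ e ∈ l, Adj d n a e
    · obtain ⟨l', h1, h2⟩ := ih a hl (fun e he => hnb e (List.mem_cons_of_mem _ he))
        (fun k => ha (List.mem_cons_of_mem _ k))
      exact ⟨l', fun x hx => List.mem_cons_of_mem _ (h1 hx), h2⟩
    · obtain ⟨e, he, hadj⟩ := hex
      rcases List.mem_cons.1 he with rfl | he
      · refine ⟨_, fun _ h => h, .cons (c := e) ?_ (.cons hcf q hq) ?_⟩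
        · rcases hadj with k | k | k
          · exact .inl k
          · exact absurd k (hnb e (by simp))
          · exact .inr k
        · intro x hx hne
          refine ⟨fun k => ha (k ▸ hx), fun k => ?_⟩
          rcases List.mem_cons.1 hx with rfl | hx
          · exact hne rfl
          · exact hl ⟨x, hx, k⟩
      · exact absurd ⟨e, he, hadj⟩ hl

/-- possible edge from an adjacency with no backward edge, along a chordless path -/
theorem IP.L1 (h : MP d n) {a b : V} {l : List V} (p : IP d n a b l) :
    ∀ c, d b c → ¬ d c a := by
  induction p with
  | nil a => intro c h1 h2; exact h.asymm h1 h2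
  | @cons a f b l haf q hq ih =>
    intro c hbc hca
    rcases haf with k | k
    · have := q.dirAll h a k (fun e he hne => (hq e he hne).2)
      have h2 : TransGen d a b := TransGen.head' k this
      exact h.acyc a ((h2.tail hbc).tail hca)
    · rcases h.r1 _ _ _ hca k with k1 | k1 | k1
      · exact ih c hbc k1
      · exact h.r2 _ _ _ k1 hca (h.nsymm _ _ k)
      · rcases h.r1 _ _ _ hbc k1 with k2 | k2 | k2
        · exact q.noback h b q.end_mem k2
        · exact h.r2 _ _ _ k2 hbc (h.nsymm _ _ k1)
        · exact h.r4 b f c a k2 hbc (h.nsymm _ _ k1) hca (h.nsymm _ _ k)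

theorem IP.extend1 (h : MP d n) {a b : V} {l : List V} (p : IP d n a b l) :
    ∀ c, d b c → ∃ l', (∀ e ∈ l', e ∈ l ∨ e = c) ∧ IP d n a c l' := by
  induction p with
  | nil a =>
    intro c hc
    exact ⟨[a, c], by simp, .cons (.inl hc) (.nil _) (by simp)⟩
  | @cons a f b l haf q hq ih =>
    intro c hbc
    have p : IP d n a b (a :: l) := .cons haf q hq
    obtain ⟨l', h1, h2⟩ := ih c hbc
    have hal : a ∉ l := by
      intro k
      by_cases e : a = f
      · subst e; rcases haf with k | k
        · exact h.dirr _ k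
        · exact h.nirr _ k
      · exact (hq a k e).1 rfl
    obtain ⟨l'', h3, h4⟩ := h2.consShort a ⟨f, h2.start_mem, haf.elim .inl (fun k => .inr (.inr k))⟩
      (by
        intro e he
        rcases h1 e he with k | rfl
        · exact p.noback h e (List.mem_cons_of_mem _ k)
        · exact p.L1 h e hbc)
      (by
        intro k
        rcases h1 a k with k | rfl
        · exact hal k
        · exact p.noback h b p.end_mem hbc)
    refine ⟨_, ?_, h4⟩
    intro e he
    rcases List.mem_cons.1 he with rfl | he
    · simp
    · rcases h1 e (h3 he) with k | k
      · exact .inl (List.mem_cons_of_mem _ k)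
      · exact .inr k

theorem IP.prepend (h : MP d n) {u b t : V} {l : List V} (p : IP d n u b l) (k : d t u) :
    (∀ e ∈ l, ¬ d e t) ∧ t ∉ l ∧ ∃ l', l' ⊆ l ∧ IP d n t b (t :: l') := by
  have h1 : ∀ e ∈ l, ¬ d e t := by
    intro e he hd
    obtain ⟨l', _, q⟩ := p.pre e he
    exact q.L1 h t hd k
  have h2 : t ∉ l := fun he => p.noback h t he k
  exact ⟨h1, h2, p.consShort t ⟨u, p.start_mem, .inl k⟩ h1 h2⟩

/-- directed edges into nodes outside `X` -/
def dX (d : V → V → Prop) (X : Set V) (a b : V) : Prop := d a b ∧ b ∉ X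

theorem IP.extend (h : MP d n) {X : Set V} {a b c : V} {l : List V} (p : IP d n a b l)
    (k : ReflTransGen (dX d X) b c) :
    ∃ l', (∀ e ∈ l', e ∈ l ∨ ReflTransGen (dX d X) b e ∧ e ∉ X) ∧ IP d n a c l' := by
  induction k with
  | refl => exact ⟨l, fun _ h => .inl h, p⟩
  | @tail x y k1 k2 ih =>
    obtain ⟨l', h1, h2⟩ := ih
    obtain ⟨l'', h3, h4⟩ := h2.extend1 h y k2.1
    refine ⟨l'', ?_, h4⟩
    intro e he
    rcases h3 e he with k | rfl
    · exact h1 e k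
    · exact .inr ⟨k1.tail k2, k2.2⟩

/-- appending an undirected edge -/
theorem IP.append (h : MP d n) {u v w : V} {l : List V} (p : IP d n u v l) :
    n v w → w ∉ l → (∃ l', (∀ e ∈ l', e ∈ l ∨ e = w) ∧ IP d n u w l') ∨ d w u := by
  induction p with
  | nil a =>
    intro hn _
    exact .inl ⟨[a, w], by simp, .cons (.inr hn) (.nil _) (by simp)⟩
  | @cons a c b l hac q hq ih =>
    intro hn hw
    have p : IP d n a b (a :: l) := .cons hac q hq
    have hw' : w ∉ l := fun k => hw (List.mem_cons_of_mem _ k)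
    have hwa : w ≠ a := fun k => hw (k ▸ by simp)
    by_cases hwa' : d w a
    · exact .inr hwa'
    left
    rcases ih hn hw' with ⟨l', h1, h2⟩ | hwc
    · have hal : a ∉ l := by
        intro k
        by_cases e : a = c
        · subst e; rcases hac with k | k
          · exact h.dirr _ k
          · exact h.nirr _ k
        · exact (hq a k e).1 rfl
      obtain ⟨l'', h3, h4⟩ := h2.consShort a
        ⟨c, h2.start_mem, hac.elim .inl (fun k => .inr (.inr k))⟩
        (by
          intro e he
          rcases h1 e he with k | rfl
          · exact p.noback h e (List.mem_cons_of_mem _ k)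
          · exact hwa')
        (by
          intro k
          rcases h1 a k with k | k
          · exact hal k
          · exact hwa k.symm)
      refine ⟨_, ?_, h4⟩
      intro e he
      rcases List.mem_cons.1 he with rfl | he
      · simp
      · rcases h1 e (h3 he) with k | k
        · exact .inl (List.mem_cons_of_mem _ k)
        · exact .inr k
    · rcases hac with k | k
      · have := q.dirAll h a k (fun e he hne => (hq e he hne).2)
        exact absurd (h.nsymm _ _ hn) (h.Dlem (TransGen.head' hwc this))
      · refine ⟨[a, w], by simp, .cons (c := w) ?_ (.nil _) (by simp)⟩
        rcases h.r1 _ _ _ hwc (h.nsymm _ _ k) with k1 | k1 | k1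
        · exact absurd k1 hwa'
        · exact .inl k1
        · exact .inr (h.nsymm _ _ k1)

variable {X Y : Set V}

/-- amenability, abstractly -/
def AM (d n : V → V → Prop) (X Y : Set V) : Prop :=
  ∀ t ∈ X, ∀ w, n t w → ∀ y ∈ Y, ∀ Q, IP d n w y Q → (∀ e ∈ Q, e ∉ X) → (∀ e ∈ Q, ¬ d e t) → False

theorem lemQ (h : MP d n) (hAM : AM d n X Y) {t : V} (ht : t ∈ X) {q y : V} (hy : y ∈ Y)
    {Q : List V} (p : IP d n q y Q) :
    (∀ e ∈ Q, e ∉ X) → (∀ e ∈ Q, ¬ d e t) → TransGen d t q → ∀ e ∈ Q, TransGen d t e := by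
  induction p with
  | nil a => intro _ _ k e he; simp at he; subst he; exact k
  | @cons a c b l hac q hq ih =>
    intro hX hb k e he
    rcases List.mem_cons.1 he with rfl | he
    · exact k
    have hX' : ∀ e ∈ l, e ∉ X := fun e he => hX e (List.mem_cons_of_mem _ he)
    have hb' : ∀ e ∈ l, ¬ d e t := fun e he => hb e (List.mem_cons_of_mem _ he)
    refine ih hy hX' hb' ?_ e he
    rcases hac with k1 | k1
    · exact k.tail k1
    · rcases h.D2 k k1 with k2 | k2
      · exact k2
      · exact (hAM t ht c k2 _ hy l q hX' hb').elim

theorem extendByAdj (h : MP d n) {c e0 y : V} {a0 : V} {Qa : List V} (p : IP d n a0 y Qa)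
    (he0 : e0 ∈ Qa) (hadj : Adj d n c e0) (hnb : ∀ e ∈ Qa, ¬ d e c) :
    ∃ Qc, (∀ e ∈ Qc, e ∈ Qa ∨ e = c) ∧ IP d n c y Qc := by
  by_cases hc : c ∈ Qa
  · obtain ⟨l', h1, h2⟩ := p.suf c hc
    exact ⟨l', fun e he => .inl (h1 he), h2⟩
  · obtain ⟨l', h1, h2⟩ := p.consShort c ⟨e0, he0, hadj⟩ hnb hc
    refine ⟨_, ?_, h2⟩
    intro e he
    rcases List.mem_cons.1 he with rfl | he
    · simp
    · exact .inl (h1 he)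

theorem lemGB (h : MP d n) (hAM : AM d n X Y) {t : V} (ht : t ∈ X) {u y : V} (hy : y ∈ Y)
    {Q : List V} (hQ : IP d n u y Q) (hQX : ∀ e ∈ Q, e ∉ X) (hQb : ∀ e ∈ Q, ¬ d e t)
    (hQt : ∀ e ∈ Q, TransGen d t e)
    {a v : V} {l : List V} (p : IP d n a v l) :
    (∀ e ∈ l, e ∉ X) → (∀ e ∈ l, ¬ d e t) → TransGen d t a →
    ((∃ Qa, IP d n a y Qa ∧ (∀ e ∈ Qa, e ∉ X) ∧ (∀ e ∈ Qa, ¬ d e t) ∧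
        ∀ e ∈ Qa, e ∈ Q ∨ e = a ∨ ∀ f ∈ l, f ≠ a → ¬ d e f) ∨ ∃ e ∈ Q, d e a) →
    TransGen d t v := by
  induction p with
  | nil a => intro _ _ k _; exact k
  | @cons a c b l hac q hq ih =>
    intro hX hb hta hst
    have hX' : ∀ e ∈ l, e ∉ X := fun e he => hX e (List.mem_cons_of_mem _ he)
    have hb' : ∀ e ∈ l, ¬ d e t := fun e he => hb e (List.mem_cons_of_mem _ he)
    have hcl : c ∈ l := q.start_mem
    rcases hac with k | k
    · have := q.dirAll h a k (fun e he hne => (hq e he hne).2)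
      exact TransGen.trans_left hta (ReflTransGen.head k this)
    have hca : c ≠ a := by rintro rfl; exact h.nirr _ k
    have hst' : (∃ Qa, IP d n c y Qa ∧ (∀ e ∈ Qa, e ∉ X) ∧ (∀ e ∈ Qa, ¬ d e t) ∧
        ∀ e ∈ Qa, e ∈ Q ∨ e = c ∨ ∀ f ∈ l, f ≠ c → ¬ d e f) ∨ ∃ e ∈ Q, d e c := by
      by_cases hB : ∃ e ∈ Q, d e c
      · exact .inr hB
      left
      rcases hst with ⟨Qa, p1, p2, p3, p4⟩ | ⟨e, he, hea⟩
      · have hnb : ∀ e ∈ Qa, ¬ d e c := by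
          intro e he hd
          rcases p4 e he with k1 | rfl | k1
          · exact hB ⟨e, k1, hd⟩
          · exact h.excl _ _ hd k
          · exact k1 c (List.mem_cons_of_mem _ hcl) hca hd
        obtain ⟨Qc, g1, g2⟩ := extendByAdj h p1 p1.start_mem
          (show Adj d n c a from .inr (.inr (h.nsymm _ _ k))) hnb
        refine ⟨Qc, g2, ?_, ?_, ?_⟩
        · intro e he
          rcases g1 e he with k1 | rfl
          · exact p2 e k1
          · exact hX' _ hcl
        · intro e he
          rcases g1 e he with k1 | rfl
          · exact p3 e k1
          · exact hb' _ hcl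
        · intro e he
          rcases g1 e he with k1 | rfl
          · rcases p4 e k1 with k2 | rfl | k2
            · exact .inl k2
            · exact .inr (.inr fun f hf hne hd => (hq f hf hne).2 (.inl hd))
            · refine .inr (.inr fun f hf hne hd => ?_)
              by_cases hfa : f = a
              · exact (hq f hf hne).1 hfa
              · exact k2 f (List.mem_cons_of_mem _ hf) hfa hd
          · exact .inr (.inl rfl)
      · have hadj : Adj d n c e := by
          rcases h.r1 _ _ _ hea k with k1 | k1 | k1
          · exact .inr (.inl k1)
          · exact .inl k1
          · exact .inr (.inr (h.nsymm _ _ k1))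
        obtain ⟨Qc, g1, g2⟩ := extendByAdj h hQ he hadj (fun e he hd => hB ⟨e, he, hd⟩)
        refine ⟨Qc, g2, ?_, ?_, ?_⟩
        · intro e he
          rcases g1 e he with k1 | rfl
          · exact hQX e k1
          · exact hX' _ hcl
        · intro e he
          rcases g1 e he with k1 | rfl
          · exact hQb e k1
          · exact hb' _ hcl
        · intro e he
          rcases g1 e he with k1 | rfl
          · exact .inl k1
          · exact .inr (.inl rfl)
    have htc : TransGen d t c := by
      rcases h.D2 hta k with k1 | k1
      · exact k1
      · exfalso
        rcases hst' with ⟨Qa, p1, p2, p3, _⟩ | ⟨e, he, hec⟩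
        · exact hAM t ht c k1 y hy Qa p1 p2 p3
        · exact h.Dlem ((hQt e he).tail hec) k1
    exact ih hX' hb' htc hst'

/-- first nodes of possibly causal paths -/
def R0 (d n : V → V → Prop) (X Y : Set V) (u : V) : Prop :=
  ∃ t ∈ X, d t u ∧ ∃ y ∈ Y, ∃ Q, IP d n u y Q ∧ ∀ e ∈ Q, e ∉ X

/-- nodes reachable from `R0` by chordless possibly directed paths avoiding `X` -/
def RR (d n : V → V → Prop) (X Y : Set V) (v : V) : Prop :=
  ∃ u, R0 d n X Y u ∧ ∃ l, IP d n u v l ∧ ∀ e ∈ l, e ∉ X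

theorem R0.rr {u : V} (hu : R0 d n X Y u) : RR d n X Y u := by
  refine ⟨u, hu, [u], .nil _, ?_⟩
  obtain ⟨t, _, _, y, _, Q, hQ, hX⟩ := hu
  intro e he; simp at he; subst he; exact hX _ hQ.start_mem

theorem RR.notX {v : V} (hv : RR d n X Y v) : v ∉ X := by
  obtain ⟨u, _, l, hl, hX⟩ := hv
  exact hX _ hl.end_mem

/-- every reachable node is a descendant of `X` -/
theorem descX (h : MP d n) (hAM : AM d n X Y) {t u y v : V} {Q l : List V} (ht : t ∈ X)
    (htu : d t u) (hy : y ∈ Y) (hQ : IP d n u y Q) (hQX : ∀ e ∈ Q, e ∉ X)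
    (hl : IP d n u v l) (hlX : ∀ e ∈ l, e ∉ X) : TransGen d t v := by
  have hQb := (hQ.prepend h htu).1
  exact lemGB h hAM ht hy hQ hQX hQb
    (lemQ h hAM ht hy hQ hQX hQb (.single htu)) hl hlX (hl.prepend h htu).1 (.single htu)
    (.inl ⟨Q, hQ, hQX, hQb, fun e he => .inl he⟩)

theorem splitX {t w : V} (k : TransGen d t w) (ht : t ∈ X) :
    w ∉ X → ∃ t' ∈ X, ∃ u, u ∉ X ∧ d t' u ∧ ReflTransGen (dX d X) u w := by
  induction k with
  | single k => intro hw; exact ⟨t, ht, _, hw, k, .refl⟩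
  | @tail b c k1 k2 ih =>
    intro hw
    by_cases hb : b ∈ X
    · exact ⟨b, hb, _, hw, k2, .refl⟩
    · obtain ⟨t', h1, u, h2, h3, h4⟩ := ih hb
      exact ⟨t', h1, u, h2, h3, h4.tail ⟨k2, hw⟩⟩

theorem prependMany (h : MP d n) {u w y : V} (k : ReflTransGen (dX d X) u w) :
    u ∉ X → ∀ Q, IP d n w y Q → (∀ e ∈ Q, e ∉ X) → ∃ Q, IP d n u y Q ∧ ∀ e ∈ Q, e ∉ X := by
  induction k with
  | refl => intro _ Q h1 h2; exact ⟨Q, h1, h2⟩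
  | @tail b c k1 k2 ih =>
    intro hu Q h1 h2
    obtain ⟨_, _, l', h3, h4⟩ := h1.prepend h k2.1
    refine ih hu _ h4 ?_
    intro e he
    rcases List.mem_cons.1 he with rfl | he
    · rcases k1.cases_tail with rfl | ⟨_, _, k3⟩
      · exact hu
      · exact k3.2
    · exact h2 e (h3 he)

theorem rrDir (h : MP d n) {v w : V} (hv : RR d n X Y v) (k : ReflTransGen (dX d X) v w) :
    RR d n X Y w := by
  obtain ⟨u, hu, l, hl, hX⟩ := hv
  obtain ⟨l', h1, h2⟩ := hl.extend h k
  exact ⟨u, hu, l', h2, fun e he => (h1 e he).elim (hX e) (fun k => k.2)⟩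

theorem rrStep (h : MP d n) (hAM : AM d n X Y) {v w : V} (hv : RR d n X Y v)
    (k : d v w ∨ n v w) (hw : w ∉ X) : RR d n X Y w := by
  rcases k with k | k
  · exact rrDir h hv (.single ⟨k, hw⟩)
  obtain ⟨u, hu, l, hl, hX⟩ := hv
  by_cases hwl : w ∈ l
  · obtain ⟨l', h1, h2⟩ := hl.pre w hwl
    exact ⟨u, hu, l', h2, fun e he => hX e (h1 he)⟩
  rcases hl.append h k hwl with ⟨l', h1, h2⟩ | hwu
  · exact ⟨u, hu, l', h2, fun e he => (h1 e he).elim (hX e) (fun k => k ▸ hw)⟩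
  · obtain ⟨t, ht, htu, y, hy, Q, hQ, hQX⟩ := hu
    obtain ⟨_, _, Q', g1, g2⟩ := hQ.prepend h hwu
    have hQX' : ∀ e ∈ w :: Q', e ∉ X := by
      intro e he
      rcases List.mem_cons.1 he with rfl | he
      · exact hw
      · exact hQX e (g1 he)
    rcases h.D2 (descX h hAM ht htu hy hQ hQX hl hX) k with k1 | k1
    · obtain ⟨t', h1, u', h2, h3, h4⟩ := splitX k1 ht hw
      obtain ⟨Q2, g3, g4⟩ := prependMany h h4 h2 _ g2 hQX'
      exact rrDir h (R0.rr ⟨t', h1, h3, y, hy, Q2, g3, g4⟩) h4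
    · exfalso
      refine hAM t ht w k1 y hy _ g2 hQX' ?_
      intro e he
      rcases List.mem_cons.1 he with rfl | he
      · exact fun k2 => h.excl' k2 k1
      · exact (hQ.prepend h htu).1 e (g1 he)

theorem rrWalk (h : MP d n) (hAM : AM d n X Y) {v w : V} {l : List V} (p : IP d n v w l) :
    RR d n X Y v → (∀ e ∈ l, e ∉ X) → RR d n X Y w := by
  induction p with
  | nil => intro hv _; exact hv
  | @cons a c b l hac q hq ih =>
    intro hv hX
    exact ih (rrStep h hAM hv hac (hX _ (List.mem_cons_of_mem _ q.start_mem)))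
      (fun e he => hX e (List.mem_cons_of_mem _ he))

theorem rrDesc (h : MP d n) (hAM : AM d n X Y) {v : V} (hv : RR d n X Y v) :
    ∃ t ∈ X, ∃ u, u ∉ X ∧ d t u ∧ ReflTransGen (dX d X) u v := by
  have hvX := hv.notX
  obtain ⟨u, ⟨t, ht, htu, y, hy, Q, hQ, hQX⟩, l, hl, hX⟩ := hv
  exact splitX (descX h hAM ht htu hy hQ hQX hl hX) ht hvX

/-- a node on a possibly directed path from `X` followed by a directed path to `Y` -/
theorem rrFromX (h : MP d n) (hAM : AM d n X Y) {t v y : V} (ht : t ∈ X) (hy : y ∈ Y) {l : List V}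
    (p : IP d n t v (t :: l)) (hX : ∀ e ∈ l, e ∉ X) (hv : v ∉ X)
    (k : ReflTransGen (dX d X) v y) : RR d n X Y v := by
  cases p with
  | nil => exact absurd ht hv
  | @cons _ c _ _ hac q hq =>
    have p : IP d n t v (t :: l) := .cons hac q hq
    obtain ⟨l', h1, h2⟩ := q.extend h k
    have hX' : ∀ e ∈ l', e ∉ X := fun e he => (h1 e he).elim (hX e) (fun k => k.2)
    rcases hac with k1 | k1
    · exact ⟨c, ⟨t, ht, k1, y, hy, l', h2, hX'⟩, l, q, hX⟩
    · exfalso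
      refine hAM t ht c k1 y hy l' h2 hX' ?_
      intro e he
      rcases h1 e he with k2 | k2
      · exact p.noback h e (List.mem_cons_of_mem _ k2)
      · obtain ⟨l2, _, g⟩ := p.extend h k2.1
        exact g.noback h e g.end_mem

end

end OSetAux

namespace OSetAux

open Relation Causal

universe w

variable {V : Type w} {G : MixedGraph V}

/-- edge usable on a possibly directed path -/
def EE (G : MixedGraph V) (a b : V) : Prop := G.dir a b ∨ G.undir a b

/-- node list of a possibly directed path -/
structure PD (G : MixedGraph V) (L : List V) : Prop where
  chain : L.IsChain (EE G)
  nb : L.Pairwise (fun a b => ¬ G.dir b a)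
  nd : L.Nodup

theorem PD.tail {a : V} {L : List V} (h : PD G (a :: L)) : PD G L :=
  ⟨h.chain.tail, (List.pairwise_cons.1 h.nb).2, (List.nodup_cons.1 h.nd).2⟩

theorem PD.suffix {L1 L2 : List V} (h : PD G (L1 ++ L2)) : PD G L2 :=
  ⟨h.chain.right_of_append, (List.pairwise_append.1 h.nb).2.1, (List.nodup_append.1 h.nd).2.1⟩

open Classical in
/-- steps from list of nodes -/
noncomputable def toSteps (G : MixedGraph V) : List V → List (Step V)
  | a :: b :: l => (a, (if G.dir a b then EdgeKind.fwd else EdgeKind.und), b) :: toSteps G (b :: l)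
  | _ => []

theorem toSteps_dst (a : V) (l : List V) : (toSteps G (a :: l)).map Step.dst = l := by
  induction l generalizing a with
  | nil => simp [toSteps]
  | cons b l ih => simp [toSteps, ih, Step.dst]

theorem pathNodes_toSteps (a b : V) (l : List V) :
    pathNodes (toSteps G (a :: b :: l)) = a :: b :: l := by
  have := toSteps_dst (G := G) a (b :: l)
  simp only [toSteps] at this ⊢
  simp only [pathNodes, this, Step.src]

theorem toSteps_kind (L : List V) :
    ∀ s ∈ toSteps G L, Step.kind s = EdgeKind.fwd ∨ Step.kind s = EdgeKind.und := by
  match L with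
  | [] => simp [toSteps]
  | [a] => simp [toSteps]
  | a :: b :: l =>
    intro s hs
    rw [toSteps, List.mem_cons] at hs
    rcases hs with rfl | hs
    · simp only [Step.kind]; split <;> simp
    · exact toSteps_kind (b :: l) s hs

theorem toSteps_valid (L : List V) (h : L.IsChain (EE G)) : ∀ s ∈ toSteps G L, stepOK G s := by
  match L with
  | [] => simp [toSteps]
  | [a] => simp [toSteps]
  | a :: b :: l =>
    intro s hs
    rw [toSteps, List.mem_cons] at hs
    rw [List.isChain_cons_cons] at h
    rcases hs with rfl | hs
    · by_cases hd : G.dir a b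
      · simp [stepOK, Step.kind, Step.src, Step.dst, hd]
      · have := h.1.resolve_left hd
        simp [stepOK, Step.kind, Step.src, Step.dst, hd, this]
    · exact toSteps_valid (b :: l) h.2 s hs

theorem toSteps_fwd (L : List V) (h : L.IsChain G.dir) : allFwd (toSteps G L) := by
  match L with
  | [] => simp [toSteps, allFwd]
  | [a] => simp [toSteps, allFwd]
  | a :: b :: l =>
    intro s hs
    rw [toSteps, List.mem_cons] at hs
    rw [List.isChain_cons_cons] at h
    rcases hs with rfl | hs
    · simp [Step.kind, h.1]
    · exact toSteps_fwd (b :: l) h.2 s hs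

theorem toSteps_chain (L : List V) :
    (toSteps G L).IsChain (fun s t => Step.dst s = Step.src t) := by
  match L with
  | [] => simp [toSteps]
  | [a] => simp [toSteps]
  | [a, b] => simp [toSteps]
  | a :: b :: c :: l =>
    have := toSteps_chain (b :: c :: l)
    simp only [toSteps] at this ⊢
    rw [List.isChain_cons_cons]
    exact ⟨rfl, this⟩

theorem toSteps_path {a b : V} {l : List V} (h : (a :: b :: l).IsChain (EE G))
    (hnd : (a :: b :: l).Nodup) : IsPath G (toSteps G (a :: b :: l)) :=
  ⟨by simp [toSteps], toSteps_valid _ h, toSteps_chain _, by rw [pathNodes_toSteps]; exact hnd⟩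

theorem toSteps_pd {a b : V} {l : List V} (h : PD G (a :: b :: l)) :
    possiblyDirected G (toSteps G (a :: b :: l)) :=
  ⟨toSteps_kind _, by rw [pathNodes_toSteps]; exact h.nb⟩

theorem chainDirList {a b : V} (k : ReflTransGen G.dir a b) :
    ∃ l, (a :: l).IsChain G.dir ∧ (a :: l).getLast? = some b ∧ (a :: l).Nodup := by
  induction k using ReflTransGen.head_induction_on with
  | refl => exact ⟨[], by simp⟩
  | @head a c hac _ ih =>
    obtain ⟨l, h1, h2, h3⟩ := ih
    by_cases ha : a ∈ c :: l
    · obtain ⟨s, t, e⟩ := List.append_of_mem ha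
      rw [e] at h1 h2 h3
      refine ⟨t, h1.right_of_append, ?_, (List.nodup_append.1 h3).2.1⟩
      rw [List.getLast?_append_of_ne_nil _ (by simp)] at h2
      exact h2
    · refine ⟨c :: l, ?_, ?_, List.nodup_cons.2 ⟨ha, h3⟩⟩
      · rw [List.isChain_cons_cons]; exact ⟨hac, h1⟩
      · rw [List.getLast?_cons_cons]; exact h2

theorem dirPathOf {a b : V} (k : ReflTransGen G.dir a b) (hne : a ≠ b) :
    ∃ p, directedPathFromTo G p a b := by
  obtain ⟨l, h1, h2, h3⟩ := chainDirList k
  match l with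
  | [] => simp at h2; exact absurd h2 hne
  | c :: l =>
    refine ⟨toSteps G (a :: c :: l), toSteps_path (h1.imp fun _ _ h => .inl h) h3, toSteps_fwd _ h1,
      ?_, ?_⟩
    · simp [startsAt, pathNodes_toSteps]
    · rw [endsAt, pathNodes_toSteps]; exact h2

theorem mpOf (hG : IsMaxPDAG G) : MP G.dir G.undir where
  acyc a k := by
    rcases TransGen.tail'_iff.1 k with ⟨c, h1, h2⟩
    by_cases e : a = c
    · subst e; exact hG.dir_irrefl _ h2
    · exact hG.acyclic _ _ (dirPathOf h1 e) h2
  nsymm := hG.undir_symm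
  nirr := hG.undir_irrefl
  excl := hG.simple_du
  r1 a b c h1 h2 := by
    by_cases h : adjacent G a c
    · rcases h with h | h | h | h | h | h
      · exact .inl h
      · exact .inr (.inl h)
      · exact .inr (.inr h)
      · exact .inr (.inr (hG.undir_symm _ _ h))
      · exact absurd h (hG.no_bidir _ _)
      · exact absurd h (hG.no_bidir _ _)
    · exact absurd h2 (hG.simple_du _ _ (hG.meek1 a b c h1 h2 h))
  r2 a b c h1 h2 h3 := hG.simple_du _ _ (hG.meek2 a b c h1 h2 h3) h3
  r4 a b c e h1 h2 h3 h4 h5 := hG.simple_du _ _ (hG.meek4 a b c e h1 h2 h3 h4 h5) h5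

theorem IP.head_eq {d n : V → V → Prop} {a b : V} {l : List V} (p : IP d n a b l) :
    ∃ l', l = a :: l' := by
  cases p <;> exact ⟨_, rfl⟩

theorem IP.getLast {d n : V → V → Prop} {a b : V} {l : List V} (p : IP d n a b l) :
    l.getLast? = some b := by
  induction p with
  | nil => simp
  | cons _ q _ ih =>
    obtain ⟨l', rfl⟩ := q.head_eq
    rw [List.getLast?_cons_cons]; exact ih

theorem IP.pd (h : MP G.dir G.undir) {a b : V} {l : List V} (p : IP G.dir G.undir a b l) :
    PD G l := by
  induction p with
  | nil => exact ⟨by simp, by simp, by simp⟩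
  | @cons a c b l hac q hq ih =>
    have p : IP G.dir G.undir a b (a :: l) := .cons hac q hq
    refine ⟨?_, List.pairwise_cons.2 ⟨fun e he => p.noback h e (List.mem_cons_of_mem _ he), ih.nb⟩,
      List.nodup_cons.2 ⟨?_, ih.nd⟩⟩
    · obtain ⟨l', rfl⟩ := q.head_eq
      rw [List.isChain_cons_cons]; exact ⟨hac, ih.chain⟩
    · intro k
      by_cases e : a = c
      · subst e; rcases hac with k | k
        · exact h.dirr _ k
        · exact h.nirr _ k
      · exact (hq a k e).1 rfl

theorem PD.shorten {b : V} (l : List V) : ∀ a, PD G (a :: l) → (a :: l).getLast? = some b →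
    ∃ l', l' ⊆ l ∧ IP G.dir G.undir a b (a :: l') := by
  induction l with
  | nil => intro a _ h; simp at h; subst h; exact ⟨[], by simp, .nil _⟩
  | cons c l ih =>
    intro a hp hb
    rw [List.getLast?_cons_cons] at hb
    obtain ⟨l', h1, h2⟩ := ih c hp.tail hb
    have hsub : (c :: l') ⊆ c :: l := List.cons_subset_cons _ h1
    have hac : EE G a c := (List.isChain_cons_cons.1 hp.chain).1
    obtain ⟨l'', h3, h4⟩ := h2.consShort a ⟨c, by simp, hac.elim .inl (fun k => .inr (.inr k))⟩
      (fun e he => (List.pairwise_cons.1 hp.nb).1 e (hsub he))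
      (fun k => (List.nodup_cons.1 hp.nd).1 (hsub k))
    exact ⟨l'', fun x hx => hsub (h3 hx), h4⟩

theorem PD.consIP (h : MP G.dir G.undir) {t w y : V} {Q : List V}
    (p : IP G.dir G.undir w y Q) (htw : EE G t w) (ht : t ∉ Q) (hb : ∀ e ∈ Q, ¬ G.dir e t) :
    PD G (t :: Q) := by
  have hp := p.pd h
  obtain ⟨Q', rfl⟩ := p.head_eq
  exact ⟨List.isChain_cons_cons.2 ⟨htw, hp.chain⟩, List.pairwise_cons.2 ⟨hb, hp.nb⟩,
    List.nodup_cons.2 ⟨ht, hp.nd⟩⟩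

variable {X Y : Set V}

theorem amOf (h : MP G.dir G.undir) (ham : amenable G X Y) : AM G.dir G.undir X Y := by
  intro t ht w hn y hy Q p hX hb
  have hp : PD G (t :: Q) := PD.consIP h p (.inr hn) (fun k => hX t k ht) hb
  have hl := p.getLast
  obtain ⟨Q', rfl⟩ := p.head_eq
  obtain ⟨s, rest, h1, h2⟩ := ham (toSteps G (t :: w :: Q'))
    ⟨toSteps_path hp.chain hp.nd, ⟨t, ht, by simp [startsAt, pathNodes_toSteps]⟩,
      ⟨y, hy, by rw [endsAt, pathNodes_toSteps, List.getLast?_cons_cons]; exact hl⟩,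
      by rw [pathNodes_toSteps]; exact hX⟩ (toSteps_pd hp)
  simp only [toSteps, List.cons.injEq] at h1
  rw [← h1.1] at h2
  have : ¬ G.dir t w := fun k => h.excl _ _ k hn
  simp [Step.kind, this] at h2

theorem R0.posscn (h : MP G.dir G.undir) {u : V} (hu : R0 G.dir G.undir X Y u) :
    u ∈ posscn G X Y := by
  obtain ⟨t, ht, htu, y, hy, Q, p, hX⟩ := hu
  have hp : PD G (t :: Q) := PD.consIP h p (.inl htu) (fun k => hX t k ht) (p.prepend h htu).1
  have hl := p.getLast
  have hu := hX u p.start_mem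
  obtain ⟨Q', rfl⟩ := p.head_eq
  refine ⟨hu, toSteps G (t :: u :: Q'), ⟨toSteps_path hp.chain hp.nd, ⟨t, ht, by simp [startsAt, pathNodes_toSteps]⟩,
      ⟨y, hy, by rw [endsAt, pathNodes_toSteps, List.getLast?_cons_cons]; exact hl⟩,
      by rw [pathNodes_toSteps]; exact hX⟩, toSteps_pd hp, by simp [pathNodes_toSteps]⟩

theorem IP.possDesc (h : MP G.dir G.undir) {a b : V} {l : List V} (p : IP G.dir G.undir a b l) :
    possDescendant G a b := by
  have hp := p.pd h
  have hl := p.getLast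
  obtain ⟨l', rfl⟩ := p.head_eq
  match l' with
  | [] => simp at hl; exact .inl hl
  | c :: l' =>
    exact .inr ⟨toSteps G (a :: c :: l'), toSteps_path hp.chain hp.nd, toSteps_pd hp,
      by simp [startsAt, pathNodes_toSteps], by rw [endsAt, pathNodes_toSteps]; exact hl⟩

theorem RR.forb (h : MP G.dir G.undir) {v : V} (hv : RR G.dir G.undir X Y v) :
    v ∈ forbP G X Y := by
  obtain ⟨u, hu, l, p, _⟩ := hv
  exact .inl ⟨u, hu.posscn h, p.possDesc h⟩

/-- node list of a step path is a chain -/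
theorem pathNodes_cons_cons (s s' : Step V) (r : List (Step V)) (e : Step.dst s = Step.src s') :
    pathNodes (s :: s' :: r) = Step.src s :: pathNodes (s' :: r) := by
  simp [pathNodes, e]

theorem chainOfSteps {R : V → V → Prop} (p : List (Step V))
    (hc : p.IsChain (fun s t => Step.dst s = Step.src t))
    (hR : ∀ s ∈ p, R (Step.src s) (Step.dst s)) : (pathNodes p).IsChain R := by
  match p with
  | [] => simp [pathNodes]
  | [s] => simpa [pathNodes] using hR s (by simp)
  | s :: s' :: r =>
    rw [List.isChain_cons_cons] at hc
    have ih := chainOfSteps (s' :: r) hc.2 (fun x hx => hR x (List.mem_cons_of_mem _ hx))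
    rw [pathNodes_cons_cons _ _ _ hc.1]
    have := hR s (by simp)
    rw [hc.1] at this
    simp only [pathNodes] at ih ⊢
    rw [List.isChain_cons_cons]
    exact ⟨this, ih⟩

theorem pdOf (hG : IsMaxPDAG G) {p : List (Step V)} (hp : IsPath G p)
    (hd : possiblyDirected G p) : PD G (pathNodes p) := by
  refine ⟨chainOfSteps p hp.chain ?_, hd.2, hp.nodup⟩
  intro s hs
  have hv := hp.valid s hs
  rcases hd.1 s hs with k | k
  · rw [stepOK, k] at hv; exact .inl hv
  · rw [stepOK, k] at hv; exact .inr (hv.elim id (hG.undir_symm _ _))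

theorem descOf {a b : V} (k : descendant G a b) : ReflTransGen G.dir a b := by
  rcases k with rfl | ⟨p, hp, hf, hs, he⟩
  · exact .refl
  have hc : (pathNodes p).IsChain G.dir := chainOfSteps p hp.chain (by
    intro s hs
    have hv := hp.valid s hs
    rw [stepOK, hf s hs] at hv; exact hv)
  rw [startsAt] at hs
  rw [endsAt] at he
  generalize pathNodes p = L at *
  match L with
  | [] => simp at hs
  | c :: l =>
    simp at hs; subst hs
    have e : (c :: l).getLast (by simp) = b := by
      rw [List.getLast?_eq_getLast_of_ne_nil (by simp)] at he; simpa using he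
    rw [← e]
    exact List.relationReflTransGen_of_exists_isChain_cons l hc rfl

theorem lastX (X : Set V) (L : List V) : (∀ e ∈ L, e ∉ X) ∨
    ∃ L1 t L2, L = L1 ++ t :: L2 ∧ t ∈ X ∧ ∀ e ∈ L2, e ∉ X := by
  induction L with
  | nil => simp
  | cons a L ih =>
    rcases ih with h | ⟨L1, t, L2, h1, h2, h3⟩
    · by_cases ha : a ∈ X
      · exact .inr ⟨[], a, L, rfl, ha, h⟩
      · left; intro e he; rcases List.mem_cons.1 he with rfl | he
        · exact ha
        · exact h e he
    · exact .inr ⟨a :: L1, t, L2, by rw [h1]; rfl, h2, h3⟩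

theorem rrChain (h : MP G.dir G.undir) (hAM : AM G.dir G.undir X Y) (l : List V) :
    ∀ c, (c :: l).IsChain (EE G) → RR G.dir G.undir X Y c → (∀ e ∈ l, e ∉ X) →
      ∀ e ∈ c :: l, RR G.dir G.undir X Y e := by
  induction l with
  | nil => intro c _ hc _ e he; simp at he; subst he; exact hc
  | cons b l ih =>
    intro c hch hc hX e he
    rw [List.isChain_cons_cons] at hch
    rcases List.mem_cons.1 he with rfl | he
    · exact hc
    · exact ih b hch.2 (rrStep h hAM hc hch.1 (hX b (by simp)))
        (fun e he => hX e (List.mem_cons_of_mem _ he)) e he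

/-- possibly directed node list from `X` to `Y`: everything after the start is in `RR` -/
theorem rrOfList (h : MP G.dir G.undir) (hAM : AM G.dir G.undir X Y) {t y : V} {l : List V}
    (ht : t ∈ X) (hy : y ∈ Y) (hp : PD G (t :: l)) (hl : (t :: l).getLast? = some y)
    (hX : ∀ e ∈ l, e ∉ X) : ∀ e ∈ l, RR G.dir G.undir X Y e := by
  match l with
  | [] => simp
  | c :: l =>
    rw [List.getLast?_cons_cons] at hl
    obtain ⟨l', h1, h2⟩ := PD.shorten l c hp.tail hl
    have hsub : (c :: l') ⊆ c :: l := List.cons_subset_cons _ h1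
    have hch := List.isChain_cons_cons.1 hp.chain
    refine rrChain h hAM l c hch.2 ?_ (fun e he => hX e (List.mem_cons_of_mem _ he))
    rcases hch.1 with k | k
    · exact R0.rr ⟨t, ht, k, y, hy, _, h2, fun e he => hX e (hsub he)⟩
    · exact (hAM t ht c k y hy _ h2 (fun e he => hX e (hsub he))
        (fun e he => (List.pairwise_cons.1 hp.nb).1 e (hsub he))).elim

theorem posscn_rr (hG : IsMaxPDAG G) (hAM : AM G.dir G.undir X Y) {v : V}
    (hv : v ∈ posscn G X Y) : RR G.dir G.undir X Y v := by
  obtain ⟨hvX, p, ⟨hp, ⟨t, ht, hs⟩, ⟨y, hy, he⟩, hX⟩, hd, hvp⟩ := hv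
  have hpd := pdOf hG hp hd
  rw [startsAt] at hs
  rw [endsAt] at he
  generalize pathNodes p = L at *
  match L with
  | [] => simp at hs
  | c :: l =>
    simp at hs; subst hs
    refine rrOfList (mpOf hG) hAM ht hy hpd he hX v ?_
    rcases List.mem_cons.1 hvp with rfl | k
    · exact absurd ht hvX
    · exact k

theorem Y_rr (hG : IsMaxPDAG G) (hAM : AM G.dir G.undir X Y) (hdisj : Disjoint X Y)
    (hposs : Y ⊆ possdeSet G X) {y : V} (hy : y ∈ Y) : RR G.dir G.undir X Y y := by
  have hyX : y ∉ X := fun k => Set.disjoint_left.1 hdisj k hy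
  obtain ⟨x, hx, rfl | ⟨p, hp, hd, hs, he⟩⟩ := hposs hy
  · exact absurd hx hyX
  have hpd := pdOf hG hp hd
  rw [startsAt] at hs
  rw [endsAt] at he
  generalize pathNodes p = L at *
  rcases lastX X L with k | ⟨L1, t, L2, rfl, k1, k2⟩
  · exact absurd hx (k x (List.mem_of_mem_head? hs))
  · rw [List.getLast?_append_of_ne_nil _ (by simp)] at he
    refine rrOfList (mpOf hG) hAM k1 hy hpd.suffix he k2 y ?_
    rcases List.mem_cons.1 (List.mem_of_getLast? he) with rfl | k
    · exact absurd k1 hyX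
    · exact k

theorem rrOfForb (hG : IsMaxPDAG G) (hAM : AM G.dir G.undir X Y) {v y : V} (hy : y ∈ Y)
    (hv : v ∈ forbP G X Y) (hvX : v ∉ X) (k : ReflTransGen (dX G.dir X) v y) :
    RR G.dir G.undir X Y v := by
  obtain ⟨u, hu, rfl | ⟨p, hp, hd, hs, he⟩⟩ := hv.resolve_right hvX
  · exact posscn_rr hG hAM hu
  have hpd := pdOf hG hp hd
  rw [startsAt] at hs
  rw [endsAt] at he
  generalize pathNodes p = L at *
  rcases lastX X L with k1 | ⟨L1, t, L2, rfl, k1, k2⟩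
  · match L with
    | [] => simp at hs
    | c :: l =>
      simp at hs; subst hs
      exact rrChain (mpOf hG) hAM l c hpd.chain (posscn_rr hG hAM hu)
        (fun e he => k1 e (List.mem_cons_of_mem _ he)) v (List.mem_of_getLast? he)
  · rw [List.getLast?_append_of_ne_nil _ (by simp)] at he
    obtain ⟨l', h1, h2⟩ := PD.shorten L2 t hpd.suffix he
    exact rrFromX (mpOf hG) hAM k1 hy h2 (fun e he => k2 e (h1 he)) hvX k

theorem cnList {w u y : V} (k1 : ReflTransGen (dX G.dir X) u w)
    (k2 : ReflTransGen (dX G.dir X) w y) :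
    ∃ l, (u :: l).IsChain G.dir ∧ (u :: l).getLast? = some y ∧ (∀ e ∈ l, e ∉ X) ∧ w ∈ u :: l := by
  have base : ∀ a, ReflTransGen (dX G.dir X) a y → ∃ l, (a :: l).IsChain G.dir ∧
      (a :: l).getLast? = some y ∧ (∀ e ∈ l, e ∉ X) := by
    intro a k
    induction k using ReflTransGen.head_induction_on with
    | refl => exact ⟨[], by simp⟩
    | @head a c hac _ ih =>
      obtain ⟨l, h1, h2, h3⟩ := ih
      refine ⟨c :: l, List.isChain_cons_cons.2 ⟨hac.1, h1⟩, ?_, ?_⟩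
      · rw [List.getLast?_cons_cons]; exact h2
      · intro e he
        rcases List.mem_cons.1 he with rfl | he
        · exact hac.2
        · exact h3 e he
  induction k1 using ReflTransGen.head_induction_on with
  | refl =>
    obtain ⟨l, h1, h2, h3⟩ := base w k2
    exact ⟨l, h1, h2, h3, by simp⟩
  | @head a c hac _ ih =>
    obtain ⟨l, h1, h2, h3, h4⟩ := ih
    refine ⟨c :: l, List.isChain_cons_cons.2 ⟨hac.1, h1⟩, ?_, ?_, List.mem_cons_of_mem _ h4⟩
    · rw [List.getLast?_cons_cons]; exact h2
    · intro e he
      rcases List.mem_cons.1 he with rfl | he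
      · exact hac.2
      · exact h3 e he

theorem rr_cn (h : MP G.dir G.undir) (hAM : AM G.dir G.undir X Y) {w y : V} (hy : y ∈ Y)
    (hw : RR G.dir G.undir X Y w) (k : ReflTransGen (dX G.dir X) w y) : w ∈ cn G X Y := by
  obtain ⟨t, ht, u, hu, htu, huw⟩ := rrDesc h hAM hw
  obtain ⟨l, h1, h2, h3, h4⟩ := cnList huw k
  have hch : (t :: u :: l).IsChain G.dir := List.isChain_cons_cons.2 ⟨htu, h1⟩
  have hpw : (t :: u :: l).Pairwise (TransGen G.dir) :=
    List.isChain_iff_pairwise.1 (hch.imp fun _ _ k => TransGen.single k)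
  have hnd : (t :: u :: l).Nodup := by
    refine List.Pairwise.imp ?_ hpw
    rintro a b k rfl
    exact h.acyc a k
  refine ⟨hw.notX, toSteps G (t :: u :: l), ⟨toSteps_path (hch.imp fun _ _ k => .inl k) hnd,
    ⟨t, ht, by simp [startsAt, pathNodes_toSteps]⟩,
    ⟨y, hy, by rw [endsAt, pathNodes_toSteps, List.getLast?_cons_cons]; exact h2⟩, ?_⟩,
    toSteps_fwd _ hch, ?_⟩
  · rw [pathNodes_toSteps]
    intro e he
    rcases List.mem_cons.1 he with rfl | he
    · exact hu
    · exact h3 e he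
  · rw [pathNodes_toSteps]; exact List.mem_cons_of_mem _ h4

theorem allFwdLem {y : V} (q : List (Step V)) : ∀ s : Step V,
    (s :: q).IsChain (fun s t => Step.dst s = Step.src t) → (∀ x ∈ s :: q, stepOK G x) →
    (∀ x ∈ s :: q, Step.dst x ∉ X) → ((s :: q).map Step.dst).getLast? = some y →
    definiteStatus G (s :: q) →
    (∀ r ∈ stepPairs (s :: q), ¬ (headAtDst (Step.kind r.1) ∧ headAtSrc (Step.kind r.2))) →
    Step.kind s = EdgeKind.fwd → ReflTransGen (dX G.dir X) (Step.dst s) y := by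
  induction q with
  | nil =>
    intro s _ _ _ hl _ _ _
    simp at hl; rw [hl]
  | cons s' q ih =>
    intro s hc hv hX hl hst hnc hk
    rw [List.isChain_cons_cons] at hc
    have hm : (s, s') ∈ stepPairs (s :: s' :: q) := by simp [stepPairs]
    have hsub : ∀ r ∈ stepPairs (s' :: q), r ∈ stepPairs (s :: s' :: q) := by
      intro r hr
      exact List.mem_cons_of_mem _ hr
    have hk' : Step.kind s' = EdgeKind.fwd := by
      rcases hst _ hm with k | k | k | k
      · exact absurd k (hnc _ hm)
      · simp [hk] at k
      · exact k
      · simp [hk] at k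
    have hd := hv s' (by simp)
    rw [stepOK, hk'] at hd
    rw [hc.1]
    refine .head ⟨hd, hX s' (by simp)⟩ (ih s' hc.2 (fun x hx => hv x (List.mem_cons_of_mem _ hx))
      (fun x hx => hX x (List.mem_cons_of_mem _ hx)) ?_ (fun r hr => hst r (hsub r hr))
      (fun r hr => hnc r (hsub r hr)) hk')
    rw [List.map_cons, List.map_cons, List.getLast?_cons_cons] at hl
    exact hl

theorem stepPairs_mem {p : List (Step V)} {r : Step V × Step V} (hr : r ∈ stepPairs p) :
    r.1 ∈ p ∧ r.2 ∈ p := by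
  have := List.of_mem_zip (a := r.1) (b := r.2) hr
  exact ⟨this.1, List.mem_of_mem_tail this.2⟩

theorem allRR (hG : IsMaxPDAG G) (hAM : AM G.dir G.undir X Y) (hdisj : Disjoint X Y)
    (hposs : Y ⊆ possdeSet G X) {y : V} (hy : y ∈ Y) (q : List (Step V)) : ∀ s : Step V,
    (s :: q).IsChain (fun s t => Step.dst s = Step.src t) → (∀ x ∈ s :: q, stepOK G x) →
    (∀ x ∈ s :: q, Step.dst x ∉ X) → ((s :: q).map Step.dst).getLast? = some y →
    definiteStatus G (s :: q) →
    (∀ r ∈ stepPairs (s :: q), RR G.dir G.undir X Y (Step.dst r.1) →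
      ¬ (headAtDst (Step.kind r.1) ∧ headAtSrc (Step.kind r.2))) →
    (∀ r ∈ stepPairs (s :: q), Step.kind r.2 = EdgeKind.fwd →
      Step.dst r.1 ∉ paSet G (cn G X Y) \ forbP G X Y) →
    ∀ x ∈ s :: q, RR G.dir G.undir X Y (Step.dst x) := by
  induction q with
  | nil =>
    intro s _ _ _ hl _ _ _ x hx
    simp at hl hx; subst hx; rw [hl]
    exact Y_rr hG hAM hdisj hposs hy
  | cons s' q ih =>
    intro s hc hv hX hl hst hnc hno
    rw [List.isChain_cons_cons] at hc
    have hm : (s, s') ∈ stepPairs (s :: s' :: q) := by simp [stepPairs]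
    have hsub : ∀ r ∈ stepPairs (s' :: q), r ∈ stepPairs (s :: s' :: q) := by
      intro r hr
      exact List.mem_cons_of_mem _ hr
    have hv' : ∀ x ∈ s' :: q, stepOK G x := fun x hx => hv x (List.mem_cons_of_mem _ hx)
    have hX' : ∀ x ∈ s' :: q, Step.dst x ∉ X := fun x hx => hX x (List.mem_cons_of_mem _ hx)
    have hst' : definiteStatus G (s' :: q) := fun r hr => hst r (hsub r hr)
    rw [List.map_cons, List.map_cons, List.getLast?_cons_cons] at hl
    have IH := ih s' hc.2 hv' hX' hl hst'
      (fun r hr => hnc r (hsub r hr)) (fun r hr => hno r (hsub r hr))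
    intro x hx
    rcases List.mem_cons.1 hx with rfl | hx
    swap
    · exact IH x hx
    have hxX : Step.dst x ∉ X := hX x (by simp)
    have hs' := IH s' (by simp)
    have hok := hv s' (by simp)
    match hk : Step.kind s' with
    | EdgeKind.fwd =>
      rw [stepOK, hk] at hok
      have hfw : ReflTransGen (dX G.dir X) (Step.dst s') y :=
        allFwdLem q s' hc.2 hv' hX' hl hst'
          (fun r hr => hnc r (hsub r hr) (IH _ (stepPairs_mem hr).1)) hk
      have hcn := rr_cn (mpOf hG) hAM hy hs' hfw
      rw [← hc.1] at hok
      have hforb : Step.dst x ∈ forbP G X Y := by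
        by_contra hf
        exact hno _ hm hk ⟨⟨_, hcn, hok⟩, hf⟩
      exact rrOfForb hG hAM hy hforb hxX (.head ⟨hok, hX' s' (by simp)⟩ hfw)
    | EdgeKind.bwd =>
      rw [stepOK, hk] at hok
      rw [hc.1] at hxX ⊢
      exact rrStep (mpOf hG) hAM hs' (.inl hok) hxX
    | EdgeKind.und =>
      rw [stepOK, hk] at hok
      rw [hc.1] at hxX ⊢
      exact rrStep (mpOf hG) hAM hs' (.inr (hok.elim (hG.undir_symm _ _) id)) hxX
    | EdgeKind.bid =>
      rw [stepOK, hk] at hok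
      exact (hok.elim (hG.no_bidir _ _) (hG.no_bidir _ _)).elim

theorem rrAnc (hG : IsMaxPDAG G) {v : V} (hv : RR G.dir G.undir X Y v) :
    ¬ ancestorOfSome G v (paSet G (cn G X Y) \ forbP G X Y) := by
  rintro ⟨c, hc, k⟩
  have k' := descOf k
  have k'' : ReflTransGen (dX G.dir ∅) v c :=
    ReflTransGen.mono (fun _ _ h => ⟨h, by simp⟩) _ _ k'
  obtain ⟨u, hu, l, p, _⟩ := hv
  obtain ⟨l', _, p'⟩ := p.extend (mpOf hG) (X := ∅) k''
  exact hc.2 (.inl ⟨u, hu.posscn (mpOf hG), p'.possDesc (mpOf hG)⟩)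

end OSetAux

open Causal in
/-- If `X` and `Y` are disjoint node sets of a maxPDAG `G` with
`Y ⊆ possde(X,G)` and some valid adjustment set relative to `(X,Y)` exists, then the
O-set `pa(cn(X,Y,G),G) \ forb(X,Y,G)` is a valid adjustment set relative to `(X,Y)`. -/
theorem o_set_is_valid_adjustment_set
    {V : Type*} [Fintype V] (G : MixedGraph V) (X Y : Set V)
    (hG : IsMaxPDAG G) (hdisj : Disjoint X Y)
    (hposs : Y ⊆ possdeSet G X)
    (hexists : ∃ Z, validAdjMax G X Y Z) :
    validAdjMax G X Y (paSet G (cn G X Y) \ forbP G X Y) := by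
  obtain ⟨Z, hZ1, ham, hZ2, hZ3⟩ := hexists
  have hmp := OSetAux.mpOf hG
  have hAM := OSetAux.amOf hmp ham
  refine ⟨?_, ham, ?_, ?_⟩
  · ext v
    simp only [Set.mem_inter_iff, Set.mem_empty_iff_false, iff_false]
    rintro ⟨⟨_, hf⟩, hx | hy⟩
    · exact hf (.inr hx)
    · exact hf ((OSetAux.Y_rr hG hAM hdisj hposs hy).forb hmp)
  · ext v
    simp only [Set.mem_inter_iff, Set.mem_empty_iff_false, iff_false]
    rintro ⟨⟨_, hf⟩, hf'⟩
    exact hf hf'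
  · intro p hp hst hnd
    by_contra hb
    have hbl := hZ3 p hp hst hnd
    obtain ⟨hpath, _, ⟨y, hy, he⟩, hX⟩ := hp
    have hne := hpath.nonempty
    have hcol : ∀ r ∈ stepPairs p, OSetAux.RR G.dir G.undir X Y (Step.dst r.1) →
        ¬ (headAtDst (Step.kind r.1) ∧ headAtSrc (Step.kind r.2)) := by
      intro r hr hrr k
      exact hb (.inr ⟨_, ⟨r, hr, rfl, k⟩, OSetAux.rrAnc hG hrr⟩)
    have hno : ∀ r ∈ stepPairs p, Step.kind r.2 = EdgeKind.fwd →
        Step.dst r.1 ∉ paSet G (cn G X Y) \ forbP G X Y := by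
      intro r hr k hO
      exact hb (.inl ⟨_, hO, r, hr, rfl, .inr (.inl k)⟩)
    have hall : ∀ x ∈ p, OSetAux.RR G.dir G.undir X Y (Step.dst x) := by
      cases p with
      | nil => exact absurd rfl hne
      | cons s q =>
        refine OSetAux.allRR hG hAM hdisj hposs hy q s hpath.chain hpath.valid ?_ ?_ hst hcol hno
        · intro x hx
          exact hX _ (List.mem_map_of_mem hx)
        · simpa [endsAt, pathNodes, List.getLast?_cons_cons] using he
    rcases hbl with ⟨v, hv, r, hr, rfl, _⟩ | ⟨v, ⟨r, hr, rfl, hk⟩, _⟩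
    · have : Step.dst r.1 ∈ Z ∩ forbP G X Y :=
        ⟨hv, (hall _ (OSetAux.stepPairs_mem hr).1).forb hmp⟩
      rw [hZ2] at this
      exact this
    · exact hcol r hr (hall _ (OSetAux.stepPairs_mem hr).1) hk
end

section
/- Let D be a DAG with node set V, let X ⊂ V and Y ∈ V \ X, and suppose that there exists a valid adjustment set relative to (X,{Y}) in D (generalised adjustment criterion). Then every edge that is present in the forbidden projection D^{XY} but not in D is a directed edge into Y. -/
namespace Causal

universe u

variable {V : Type u}

/-- Collider-free paths from a node to `Y`, recursively. -/
inductive GP (D : MixedGraph V) (Y : V) : V → List (Step V) → Prop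
  | nil : GP D Y Y []
  | cons (s : Step V) (acc : List (Step V)) : stepOK D s →
      Step.src s ∉ Step.dst s :: acc.map Step.dst →
      (∀ t ∈ acc.head?, ¬ (headAtDst (Step.kind s) ∧ headAtSrc (Step.kind t))) →
      GP D Y (Step.dst s) acc → GP D Y (Step.src s) (s :: acc)

theorem GP.suffix {D : MixedGraph V} {Y c : V} {acc : List (Step V)} (h : GP D Y c acc)
    (v : V) (hv : v ∈ c :: acc.map Step.dst) : ∃ acc', acc' <:+ acc ∧ GP D Y v acc' := by
  induction h with
  | nil =>
    simp at hv
    subst hv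
    exact ⟨[], List.suffix_rfl, GP.nil⟩
  | cons s acc h1 h2 h3 h4 ih =>
    rw [List.mem_cons] at hv
    rcases hv with rfl | hv
    · exact ⟨_, List.suffix_rfl, GP.cons s acc h1 h2 h3 h4⟩
    · obtain ⟨acc', h, h'⟩ := ih (by simpa using hv)
      exact ⟨acc', h.trans (List.suffix_cons _ _), h'⟩

theorem GP.ext {D : MixedGraph V} {Y : V} {acc : List (Step V)} (s : Step V)
    (h : GP D Y (Step.dst s) acc) (hs : stepOK D s)
    (h3 : ∀ t ∈ acc.head?, ¬ (headAtDst (Step.kind s) ∧ headAtSrc (Step.kind t))) :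
    ∃ acc', acc' <:+ s :: acc ∧ GP D Y (Step.src s) acc' := by
  by_cases hv : Step.src s ∈ Step.dst s :: acc.map Step.dst
  · obtain ⟨acc', h1, h2⟩ := h.suffix _ hv
    exact ⟨acc', h1.trans (List.suffix_cons _ _), h2⟩
  · exact ⟨_, List.suffix_rfl, GP.cons s acc hs hv h3 h⟩

theorem GP.nodes {D : MixedGraph V} {Y c : V} {acc : List (Step V)} (h : GP D Y c acc) :
    c :: acc.map Step.dst = acc.map Step.src ++ [Y] := by
  induction h with
  | nil => rfl
  | cons s acc h1 h2 h3 h4 ih => simp [← ih]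

theorem GP.nodup {D : MixedGraph V} {Y c : V} {acc : List (Step V)} (h : GP D Y c acc) :
    (c :: acc.map Step.dst).Nodup := by
  induction h with
  | nil => simp
  | cons s acc h1 h2 h3 h4 ih => exact List.nodup_cons.2 ⟨h2, ih⟩

theorem GP.valid {D : MixedGraph V} {Y c : V} {acc : List (Step V)} (h : GP D Y c acc) :
    ∀ s ∈ acc, stepOK D s := by
  induction h with
  | nil => simp
  | cons s acc h1 h2 h3 h4 ih =>
    intro t ht
    rcases List.mem_cons.1 ht with rfl | ht
    exacts [h1, ih _ ht]

theorem GP.pathNodes_eq {D : MixedGraph V} {Y c : V} {acc : List (Step V)} (h : GP D Y c acc)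
    (hne : acc ≠ []) : pathNodes acc = c :: acc.map Step.dst := by
  cases h with
  | nil => exact absurd rfl hne
  | cons s acc h1 h2 h3 h4 => rfl

theorem GP.head_src {D : MixedGraph V} {Y c : V} {acc : List (Step V)} (h : GP D Y c acc) :
    ∀ t ∈ acc.head?, c = Step.src t := by
  cases h with
  | nil => simp
  | cons s acc h1 h2 h3 h4 => simp

theorem GP.chain {D : MixedGraph V} {Y c : V} {acc : List (Step V)} (h : GP D Y c acc) :
    acc.IsChain (fun s t => Step.dst s = Step.src t) := by
  induction h with
  | nil => simp
  | cons s acc h1 h2 h3 h4 ih => exact List.isChain_cons.2 ⟨h4.head_src, ih⟩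

theorem GP.noCollider {D : MixedGraph V} {Y c : V} {acc : List (Step V)} (h : GP D Y c acc)
    (v : V) : ¬ colliderAt acc v := by
  induction h with
  | nil => rintro ⟨q, hq, -⟩; simp [stepPairs] at hq
  | cons s acc h1 h2 h3 h4 ih =>
    rintro ⟨q, hq, e, a1, a2⟩
    cases acc with
    | nil => simp [stepPairs] at hq
    | cons t acc =>
      simp only [stepPairs, List.tail_cons, List.zip_cons_cons, List.mem_cons] at hq
      rcases hq with rfl | hq
      · exact h3 t (by simp) ⟨a1, a2⟩
      · exact ih ⟨q, hq, e, a1, a2⟩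

theorem GP.isPath {D : MixedGraph V} {Y c : V} {acc : List (Step V)} (h : GP D Y c acc)
    (hne : acc ≠ []) : IsPath D acc ∧ startsAt acc c ∧ endsAt acc Y := by
  refine ⟨⟨hne, h.valid, h.chain, ?_⟩, ?_, ?_⟩
  · rw [h.pathNodes_eq hne]; exact h.nodup
  · unfold startsAt; rw [h.pathNodes_eq hne]; rfl
  · unfold endsAt; rw [h.pathNodes_eq hne, h.nodes]; simp

theorem GP.of_directed {D : MixedGraph V} {Y : V} : ∀ (p : List (Step V)) (c : V),
    directedPathFromTo D p c Y → GP D Y c p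
  | [], c, h => absurd rfl h.1.nonempty
  | [s], c, ⟨h1, h2, h3, h4⟩ => by
    have e1 : Step.src s = c := by simpa [startsAt, pathNodes] using h3
    have e2 : Step.dst s = Y := by simpa [endsAt, pathNodes] using h4
    have hn := h1.nodup
    subst e1
    refine GP.cons s [] (h1.valid s (by simp)) ?_ (by simp) (by rw [e2]; exact GP.nil)
    exact (List.nodup_cons.1 hn).1
  | s :: t :: r, c, ⟨h1, h2, h3, h4⟩ => by
    have e1 : Step.src s = c := by simpa [startsAt, pathNodes] using h3
    have hc : Step.dst s = Step.src t ∧ (t :: r).IsChain (fun s t => Step.dst s = Step.src t) := by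
      exact List.isChain_cons_cons.1 h1.chain
    have hn := h1.nodup
    have hn' := List.nodup_cons.1 hn
    subst e1
    have hpn : pathNodes (t :: r) = Step.dst s :: (t :: r).map Step.dst := by
      rw [hc.1]; rfl
    refine GP.cons s _ (h1.valid s (by simp)) hn'.1 ?_ (GP.of_directed (t :: r) _ ⟨⟨by simp, ?_, hc.2, ?_⟩, ?_, ?_, ?_⟩)
    · intro u hu
      have : u = t := by simpa using hu.symm
      subst this
      rw [h2 u (by simp)]
      simp [headAtSrc]
    · intro u hu; exact h1.valid u (List.mem_cons_of_mem _ hu)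
    · rw [hpn]; exact hn'.2
    · intro u hu; exact h2 u (List.mem_cons_of_mem _ hu)
    · unfold startsAt; rw [hpn]; rfl
    · unfold endsAt at h4 ⊢
      rw [hpn]
      simpa [pathNodes] using h4

theorem GP.reach {D : MixedGraph V} {Y c : V} {acc : List (Step V)} (h : GP D Y c acc)
    (hf : allFwd acc) : Relation.ReflTransGen D.dir c Y := by
  induction h with
  | nil => exact .refl
  | cons s acc h1 h2 h3 h4 ih =>
    refine .head ?_ (ih fun t ht => hf t (List.mem_cons_of_mem _ ht))
    have := hf s (by simp)
    simpa [stepOK, this] using h1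

theorem GP.of_reach {D : MixedGraph V} {Y c : V} (h : Relation.ReflTransGen D.dir c Y) :
    ∃ acc, allFwd acc ∧ GP D Y c acc := by
  induction h using Relation.ReflTransGen.head_induction_on with
  | refl => exact ⟨[], by simp [allFwd], GP.nil⟩
  | @head a b hab _ ih =>
    obtain ⟨acc, hf, hg⟩ := ih
    obtain ⟨acc', h1, h2⟩ := GP.ext (a, EdgeKind.fwd, b) hg hab (by
      intro t ht
      rw [hf t (List.mem_of_mem_head? ht)]
      simp [headAtSrc])
    refine ⟨acc', ?_, h2⟩
    intro t ht
    rcases List.mem_cons.1 (h1.subset ht) with rfl | ht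
    exacts [rfl, hf _ ht]

theorem descendant_iff {D : MixedGraph V} {a b : V} :
    descendant D a b ↔ Relation.ReflTransGen D.dir a b := by
  constructor
  · rintro (rfl | ⟨p, hp⟩)
    · exact .refl
    · exact (GP.of_directed p a hp).reach hp.2.1
  · intro h
    obtain ⟨acc, hf, hg⟩ := GP.of_reach h
    by_cases hne : acc = []
    · subst hne
      cases hg
      exact .inl rfl
    · obtain ⟨h1, h2, h3⟩ := hg.isPath hne
      exact .inr ⟨acc, h1, hf, h2, h3⟩

theorem deSet_dir {D : MixedGraph V} {A : Set V} {b d : V} (hb : b ∈ deSet D A)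
    (h : Relation.ReflTransGen D.dir b d) : d ∈ deSet D A := by
  obtain ⟨a, ha, hab⟩ := hb
  exact ⟨a, ha, descendant_iff.2 ((descendant_iff.1 hab).trans h)⟩

theorem dir_of_headAtSrc {D : MixedGraph V} (hD : ∀ a b, ¬ D.bidir a b) {s : Step V}
    (h : stepOK D s) (hs : headAtSrc (Step.kind s)) : D.dir (Step.dst s) (Step.src s) := by
  rcases s with ⟨x, k, y⟩
  cases k
  · exact hs.elim
  · exact h
  · exact hs.elim
  · exact (h.elim (hD _ _) (hD _ _)).elim

theorem dir_of_headAtDst {D : MixedGraph V} (hD : ∀ a b, ¬ D.bidir a b) {s : Step V}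
    (h : stepOK D s) (hs : headAtDst (Step.kind s)) : D.dir (Step.src s) (Step.dst s) := by
  rcases s with ⟨x, k, y⟩
  cases k
  · exact h
  · exact hs.elim
  · exact hs.elim
  · exact (h.elim (hD _ _) (hD _ _)).elim

/-- With a valid adjustment set, no treatment node descends from a causal node. -/
theorem no_X_desc {D : MixedGraph V} {X : Set V} {Y : V} {Z : Set V}
    (hY : Y ∉ X) (hZ : validAdjDAG D X {Y} Z) {b : V} (hb : b ∈ deSet D (cn D X {Y})) :
    b ∉ X := by
  obtain ⟨c, hc, hcb⟩ := hb
  have hT : ∀ d, Relation.ReflTransGen D.dir c d → d ∉ Z := by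
    intro d hd hdZ
    have : d ∈ Z ∩ forbD D X {Y} := ⟨hdZ, .inl ⟨c, hc, descendant_iff.2 hd⟩⟩
    rw [hZ.2.1] at this
    exact this
  have hYZ : Y ∉ Z := by
    intro h
    have : Y ∈ Z ∩ (X ∪ {Y}) := ⟨h, .inr rfl⟩
    rw [hZ.1] at this
    exact this
  have key : b ∉ X ∧ ∃ acc, GP D Y b acc ∧ ∀ t ∈ acc, Step.src t ∉ X ∧ Step.src t ∉ Z := by
    have hr := descendant_iff.1 hcb
    clear hcb
    induction hr with
    | refl =>
      obtain ⟨hcX, p, ⟨hp, ⟨a, ha, has⟩, ⟨y, hy, hye⟩, hprop⟩, hf, hm⟩ := hc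
      have hy' : y = Y := hy
      subst hy'
      have hg := GP.of_directed p a ⟨hp, hf, has, hye⟩
      have hpn := hg.pathNodes_eq hp.nonempty
      rw [hpn] at hm hprop
      obtain ⟨acc, hs, hg'⟩ := hg.suffix c hm
      have hf' : allFwd acc := fun t ht => hf t (hs.subset ht)
      refine ⟨hcX, acc, hg', ?_⟩
      intro t ht
      have h1 : Step.src t ∈ c :: acc.map Step.dst := by
        rw [hg'.nodes]
        exact List.mem_append_left _ (List.mem_map_of_mem ht)
      constructor
      · rcases List.mem_cons.1 h1 with e | h1
        · rw [e]; exact hcX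
        · exact hprop _ ((hs.map Step.dst).subset h1)
      · -- reachable from c along acc
        apply hT
        have : ∀ (c : V) (acc : List (Step V)), GP D y c acc → allFwd acc → ∀ t ∈ acc,
            Relation.ReflTransGen D.dir c (Step.src t) := by
          intro c acc h
          induction h with
          | nil => simp
          | cons s acc h1 h2 h3 h4 ih =>
            intro hf t ht
            rcases List.mem_cons.1 ht with rfl | ht
            · exact .refl
            · refine .head ?_ (ih (fun t ht => hf t (List.mem_cons_of_mem _ ht)) t ht)
              have := hf s (by simp)
              simpa [stepOK, this] using h1
        exact this c acc hg' hf' t ht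
    | @tail b d hcb hbd ih =>
      obtain ⟨hbX, acc, hg, hacc⟩ := ih
      have hnodes : ∀ v ∈ b :: acc.map Step.dst, v ∉ X ∧ v ∉ Z := by
        intro v hv
        rw [hg.nodes, List.mem_append, List.mem_map] at hv
        rcases hv with ⟨t, ht, rfl⟩ | hv
        · exact hacc t ht
        · have : v = Y := by simpa using hv
          subst this
          exact ⟨hY, hYZ⟩
      have hdX : d ∉ X := by
        intro hdX
        have hg2 : GP D Y d ((d, EdgeKind.bwd, b) :: acc) :=
          GP.cons (d, EdgeKind.bwd, b) acc hbd (fun h => (hnodes d h).1 hdX)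
            (by simp [headAtDst, Step.kind]) hg
        obtain ⟨h1, h2, h3⟩ := hg2.isPath (by simp)
        have hbl := hZ.2.2 _ ⟨h1, ⟨d, hdX, h2⟩, ⟨Y, rfl, h3⟩, fun v hv => (hnodes v hv).1⟩ (by
          intro hf
          have := hf (d, EdgeKind.bwd, b) (by simp)
          simp [Step.kind] at this)
        rcases hbl with ⟨v, hvZ, hv, -⟩ | ⟨v, hv, -⟩
        · exact (hnodes v (List.dropLast_subset _ hv)).2 hvZ
        · exact hg2.noCollider v hv
      obtain ⟨acc', h1, h2⟩ := GP.ext (d, EdgeKind.bwd, b) hg hbd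
        (by simp [headAtDst, Step.kind])
      refine ⟨hdX, acc', h2, ?_⟩
      intro t ht
      rcases List.mem_cons.1 (h1.subset ht) with rfl | ht
      · exact ⟨hdX, hT d (hcb.tail hbd)⟩
      · exact hacc t ht
  exact key.1

end Causal

open Causal in
/-- If a valid adjustment set relative to `(X,{Y})` exists in a DAG `D`,
then every edge present in the forbidden projection `D^{XY}` but not in `D` is a
directed edge into `Y` (in particular `D^{XY}` has no bi-directed edges, and every
undirected edge of `D^{XY}` is one of `D`). -/
theorem new_edges_in_forbidden_projection_are_into_Y
    {V : Type*} [Fintype V] (D : MixedGraph V) (X : Set V) (Y : V)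
    (hD : IsDAG D) (hY : Y ∉ X)
    (hexists : ∃ Z, validAdjDAG D X {Y} Z) :
    (∀ a b, (dagProj D X {Y}).dir a b → ¬ D.dir a b → b = Y) ∧
    (∀ a b, ¬ (dagProj D X {Y}).bidir a b) ∧
    (∀ a b, (dagProj D X {Y}).undir a b → D.undir a b) := by
  obtain ⟨Z, hZ⟩ := hexists
  have hT : ∀ b, b ∉ forbD D X {Y} \ (X ∪ {Y}) → b ∈ deSet D (cn D X {Y}) → b = Y := by
    intro b hb hbT
    by_contra hne
    exact hb ⟨.inl hbT, fun h => h.elim (no_X_desc hY hZ hbT) hne⟩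
  have hF : ∀ v, v ∈ forbD D X {Y} \ (X ∪ {Y}) → v ∈ deSet D (cn D X {Y}) := by
    rintro v ⟨h1 | h1, h2⟩
    · exact h1
    · exact absurd (Or.inl h1) h2
  refine ⟨?_, ?_, fun a b h => h.2.2⟩
  · rintro a b ⟨-, hb, p, hp, hint⟩ hab
    apply hT b hb
    have hg := GP.of_directed p a hp
    have hf := hp.2.1
    cases hg with
    | nil => exact absurd rfl hp.1.nonempty
    | cons s acc h1 h2 h3 h4 =>
      have hs := hf s (by simp)
      have hd : D.dir (Step.src s) (Step.dst s) := by simpa [stepOK, hs] using h1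
      cases acc with
      | nil =>
        have e : Step.dst s = b := by simpa using h4.nodes
        exact absurd (e ▸ hd) hab
      | cons t r =>
        exact deSet_dir (hF _ (hint (Step.dst s) (by simp [interiorNodes, pathNodes])))
          (h4.reach fun t ht => hf t (List.mem_cons_of_mem _ ht))
  · rintro a b ⟨ha, hb, p, hp, hsa, heb, hne, ⟨s, r, e1, hs⟩, ⟨s', r', e2, hs'⟩, hint⟩
    have ea : Step.src s = a := by simpa [startsAt, pathNodes, e1] using hsa
    have eb : Step.dst s' = b := by
      have : p ≠ [] := hp.nonempty
      have h : pathNodes p = a :: p.map Step.dst := by subst e1; rw [← ea]; rfl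
      rw [endsAt, h, e2] at heb
      simpa [List.getLast?_cons] using heb
    have hsd : D.dir (Step.dst s) (Step.src s) := by
      have := hp.valid s (by simp [e1])
      exact dir_of_headAtSrc hD.no_bidir this hs
    have hsd' : D.dir (Step.src s') (Step.dst s') := by
      have := hp.valid s' (by simp [e2])
      exact dir_of_headAtDst hD.no_bidir this hs'
    have hrne : r ≠ [] := by
      rintro rfl
      simp [e1, interiorNodes, pathNodes] at hne
    have h1 : Step.dst s ∈ interiorNodes p := by
      cases r with
      | nil => exact absurd rfl hrne
      | cons t r => simp [e1, interiorNodes, pathNodes]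
    have hint_eq : interiorNodes p = r'.map Step.dst := by
      have h : pathNodes p = a :: p.map Step.dst := by subst e1; rw [← ea]; rfl
      rw [interiorNodes, h, e2]
      simp
    have h2 : Step.src s' ∈ interiorNodes p := by
      rcases List.eq_nil_or_concat r' with h | ⟨q, u, h⟩
      · rw [hint_eq, h] at hne
        simp at hne
      · have hc : List.IsChain (fun s t => Step.dst s = Step.src t) p := hp.chain
        rw [e2, h] at hc
        simp [List.isChain_append] at hc
        rw [hint_eq, h]
        simp [hc.2.1]
    have e3 : a = Y := hT a ha (deSet_dir (hF _ (hint _ h1).1) (ea ▸ .single hsd))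
    have e4 : b = Y := hT b hb (deSet_dir (hF _ (hint _ h2).1) (eb ▸ .single hsd'))
    have hn := hp.nodup
    have h : pathNodes p = a :: p.map Step.dst := by subst e1; rw [← ea]; rfl
    rw [h] at hn
    apply (List.nodup_cons.1 hn).1
    rw [e3, ← e4, ← eb]
    exact List.mem_map_of_mem (by simp [e2])
end

section
/- Let X and Y be distinct nodes of a DAG D and let Z be a valid adjustment set relative to ({X},{Y}) in D (generalised adjustment criterion). Consider the pruning procedure which, starting from Z' = Z, repeatedly removes from Z' any node Z_i ∈ Z' such that Y is d-separated from Z_i given {X} ∪ (Z' \ {Z_i}) in D, until no such node remains. Then the resulting set Z' is a valid adjustment set relative to ({X},{Y}) in D, and Z' does not depend on the order in which nodes are removed. -/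
namespace Causal

universe u

variable {V : Type u}

theorem mem_stepPairs_iff (p : List (Step V)) (s t : Step V) :
    (s, t) ∈ stepPairs p ↔ ∃ l r, p = l ++ s :: t :: r := by
  induction p with
  | nil => simp [stepPairs]
  | cons a p ih =>
    cases p with
    | nil =>
      simp only [stepPairs, List.tail_cons, List.zip_nil_right, List.not_mem_nil, false_iff]
      rintro ⟨l, r, h⟩
      have := congrArg List.length h
      simp at this
      omega
    | cons b p =>
      have e : stepPairs (a :: b :: p) = (a, b) :: stepPairs (b :: p) := by
        simp [stepPairs]
      rw [e, List.mem_cons, ih]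
      constructor
      · rintro (h | ⟨l, r, h⟩)
        · obtain ⟨rfl, rfl⟩ := Prod.mk.inj h
          exact ⟨[], p, rfl⟩
        · exact ⟨a :: l, r, by rw [h]; rfl⟩
      · rintro ⟨l, r, h⟩
        cases l with
        | nil =>
          simp only [List.nil_append, List.cons.injEq] at h
          left; rw [h.1, h.2.1]
        | cons c l =>
          simp only [List.cons_append, List.cons.injEq] at h
          right; exact ⟨l, r, h.2⟩

theorem colliderAt_iff (p : List (Step V)) (v : V) :
    colliderAt p v ↔ ∃ l s t r, p = l ++ s :: t :: r ∧ Step.dst s = v ∧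
      headAtDst (Step.kind s) ∧ headAtSrc (Step.kind t) := by
  constructor
  · rintro ⟨⟨s, t⟩, hm, h⟩
    obtain ⟨l, r, e⟩ := (mem_stepPairs_iff p s t).1 hm
    exact ⟨l, s, t, r, e, h⟩
  · rintro ⟨l, s, t, r, e, h⟩
    exact ⟨(s, t), (mem_stepPairs_iff p s t).2 ⟨l, r, e⟩, h⟩

theorem mem_interior_iff (p : List (Step V)) (v : V) :
    v ∈ interiorNodes p ↔ ∃ l s t r, p = l ++ s :: t :: r ∧ Step.dst s = v := by
  have e : interiorNodes p = (p.dropLast).map Step.dst := by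
    cases p with
    | nil => rfl
    | cons a p => simp [interiorNodes, pathNodes, List.map_dropLast]
  rw [e, List.mem_map]
  constructor
  · rintro ⟨s, hs, rfl⟩
    obtain ⟨l, r, h⟩ := List.append_of_mem hs
    have hp : p ≠ [] := by rintro rfl; simp at hs
    have h2 := List.dropLast_append_getLast hp
    rw [h] at h2
    cases r with
    | nil => exact ⟨l, s, p.getLast hp, [], by simpa using h2.symm, rfl⟩
    | cons t r => exact ⟨l, s, t, r ++ [p.getLast hp], by simpa using h2.symm, rfl⟩
  · rintro ⟨l, s, t, r, rfl, rfl⟩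
    exact ⟨s, by simp, rfl⟩

theorem dst_nodup {p : List (Step V)} (h : (pathNodes p).Nodup) : (p.map Step.dst).Nodup := by
  cases p with
  | nil => simp
  | cons a p => exact (List.nodup_cons.1 h).2

theorem split_unique {p : List (Step V)} (h : (p.map Step.dst).Nodup)
    {l s r l' s' r' : _} (e : p = l ++ s :: r) (e' : p = l' ++ s' :: r')
    (hd : Step.dst s = Step.dst s') : s = s' ∧ r = r' := by
  induction p generalizing l l' with
  | nil => simp at e
  | cons a p ih =>
    rw [List.map_cons, List.nodup_cons] at h
    cases l with
    | nil =>
      simp only [List.nil_append, List.cons.injEq] at e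
      cases l' with
      | nil =>
        simp only [List.nil_append, List.cons.injEq] at e'
        exact ⟨e.1.symm.trans e'.1, e.2.symm.trans e'.2⟩
      | cons b l' =>
        simp only [List.cons_append, List.cons.injEq] at e'
        exfalso; apply h.1
        rw [e.1, hd, e'.2]; simp
    | cons c l =>
      simp only [List.cons_append, List.cons.injEq] at e
      cases l' with
      | nil =>
        simp only [List.nil_append, List.cons.injEq] at e'
        exfalso; apply h.1
        rw [e'.1, ← hd, e.2]; simp
      | cons b l' =>
        simp only [List.cons_append, List.cons.injEq] at e'
        exact ih h.2 e.2 e'.2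

theorem nonColliderAt_iff {p : List (Step V)} (h : (pathNodes p).Nodup) (v : V) :
    nonColliderAt p v ↔ ∃ l s t r, p = l ++ s :: t :: r ∧ Step.dst s = v ∧
      ¬ (headAtDst (Step.kind s) ∧ headAtSrc (Step.kind t)) := by
  rw [nonColliderAt, mem_interior_iff, colliderAt_iff]
  constructor
  · rintro ⟨⟨l, s, t, r, e, hd⟩, hn⟩
    exact ⟨l, s, t, r, e, hd, fun hh => hn ⟨l, s, t, r, e, hd, hh⟩⟩
  · rintro ⟨l, s, t, r, e, hd, hn⟩
    refine ⟨⟨l, s, t, r, e, hd⟩, ?_⟩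
    rintro ⟨l', s', t', r', e', hd', hh⟩
    obtain ⟨rfl, h2⟩ := split_unique (dst_nodup h) e e' (hd.trans hd'.symm)
    simp only [List.cons.injEq] at h2
    rw [← h2.1] at hh
    exact hn hh

theorem blocked_mono {G : MixedGraph V} {q : List (Step V)} {C C' : Set V} (hC : C ⊆ C')
    (h : blocked G q C') : blocked G q C ∨ ∃ v ∈ C', v ∉ C ∧ nonColliderAt q v := by
  rcases h with ⟨v, hv, hn⟩ | ⟨v, hc, ha⟩
  · by_cases hv' : v ∈ C
    · exact Or.inl (Or.inl ⟨v, hv', hn⟩)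
    · exact Or.inr ⟨v, hv, hv', hn⟩
  · exact Or.inl (Or.inr ⟨v, hc, fun ⟨c, hc1, hc2⟩ => ha ⟨c, hC hc1, hc2⟩⟩)

theorem pathNodes_cons_cons {s t : Step V} {r : List (Step V)} (h : Step.dst s = Step.src t) :
    pathNodes (s :: t :: r) = Step.src s :: pathNodes (t :: r) := by
  simp [pathNodes, h]

theorem pathNodes_concat {p : List (Step V)} (hp : p ≠ []) (s : Step V) :
    pathNodes (p ++ [s]) = pathNodes p ++ [Step.dst s] := by
  cases p with
  | nil => exact absurd rfl hp
  | cons a p => simp [pathNodes]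

theorem IsPath.left {G : MixedGraph V} {q r : List (Step V)} (h : IsPath G (q ++ r))
    (hq : q ≠ []) : IsPath G q := by
  refine ⟨hq, fun s hs => h.valid s (by simp [hs]), (List.isChain_append.1 h.chain).1, ?_⟩
  have := h.nodup
  cases q with
  | nil => exact absurd rfl hq
  | cons a q =>
    refine this.sublist ?_
    simp [pathNodes]

theorem IsPath.right {G : MixedGraph V} {q r : List (Step V)} (h : IsPath G (q ++ r))
    (hr : r ≠ []) : IsPath G r := by
  induction q with
  | nil => exact h
  | cons a q ih =>
    apply ih
    refine ⟨by simp [hr], fun s hs => h.valid s (by simpa using Or.inr hs),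
      (List.isChain_append (l₁ := [a]).1 h.chain).2.1, ?_⟩
    have hn := h.nodup
    have hc := h.chain
    rw [List.cons_append] at hn hc
    cases hqr : q ++ r with
    | nil => simp [pathNodes]
    | cons b t =>
      rw [hqr] at hn hc
      rw [pathNodes_cons_cons (List.isChain_cons_cons.1 hc).1] at hn
      exact (List.nodup_cons.1 hn).2

theorem nonColl_infix {l q r : List (Step V)} (hp : (pathNodes (l ++ q ++ r)).Nodup)
    (hq : (pathNodes q).Nodup) {v : V} (h : nonColliderAt q v) :
    nonColliderAt (l ++ q ++ r) v := by
  rw [nonColliderAt_iff hq] at h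
  rw [nonColliderAt_iff hp]
  obtain ⟨l', s, t, r', rfl, h⟩ := h
  exact ⟨l ++ l', s, t, r' ++ r, by simp, h⟩

theorem blocked_infix {G : MixedGraph V} {l q r : List (Step V)}
    (hp : (pathNodes (l ++ q ++ r)).Nodup) (hq : (pathNodes q).Nodup) {C : Set V}
    (h : blocked G q C) : blocked G (l ++ q ++ r) C := by
  rcases h with ⟨v, hv, hn⟩ | ⟨v, hc, ha⟩
  · exact Or.inl ⟨v, hv, nonColl_infix hp hq hn⟩
  · refine Or.inr ⟨v, ?_, ha⟩
    rw [colliderAt_iff] at hc ⊢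
    obtain ⟨l', s, t, r', rfl, h⟩ := hc
    exact ⟨l ++ l', s, t, r' ++ r, by simp, h⟩

/-- Reversal of edge kinds. -/
def EdgeKind.rev : EdgeKind → EdgeKind
  | .fwd => .bwd | .bwd => .fwd | .und => .und | .bid => .bid

/-- Reversal of a step. -/
def Step.rev (s : Step V) : Step V := (Step.dst s, EdgeKind.rev (Step.kind s), Step.src s)

/-- Reversal of a path. -/
def revPath (p : List (Step V)) : List (Step V) := (p.map Step.rev).reverse

theorem src_rev (s : Step V) : Step.src (Step.rev s) = Step.dst s := rfl
theorem dst_rev (s : Step V) : Step.dst (Step.rev s) = Step.src s := rfl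
theorem kind_rev (s : Step V) : Step.kind (Step.rev s) = EdgeKind.rev (Step.kind s) := rfl
theorem headAtDst_rev (k : EdgeKind) : headAtDst k.rev ↔ headAtSrc k := by
  cases k <;> simp [EdgeKind.rev, headAtDst, headAtSrc]
theorem headAtSrc_rev (k : EdgeKind) : headAtSrc k.rev ↔ headAtDst k := by
  cases k <;> simp [EdgeKind.rev, headAtDst, headAtSrc]
theorem rev_rev_step (s : Step V) : Step.rev (Step.rev s) = s := by
  obtain ⟨a, k, b⟩ := s
  cases k <;> rfl
theorem revPath_revPath (p : List (Step V)) : revPath (revPath p) = p := by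
  have : (Step.rev ∘ Step.rev : Step V → Step V) = id := funext rev_rev_step
  simp [revPath, this]

theorem stepOK_rev {G : MixedGraph V} {s : Step V} (h : stepOK G s) : stepOK G (Step.rev s) := by
  obtain ⟨a, k, b⟩ := s
  cases k
  · exact h
  · exact h
  · exact Or.symm h
  · exact Or.symm h

theorem pathNodes_revPath {p : List (Step V)}
    (h : p.IsChain (fun s t => Step.dst s = Step.src t)) :
    pathNodes (revPath p) = (pathNodes p).reverse := by
  induction p with
  | nil => rfl
  | cons a p ih =>
    cases p with
    | nil => simp [revPath, pathNodes, src_rev, dst_rev]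
    | cons b p =>
      rw [List.isChain_cons_cons] at h
      have e : revPath (a :: b :: p) = revPath (b :: p) ++ [Step.rev a] := by simp [revPath]
      rw [e, pathNodes_concat (by simp [revPath]), ih h.2, pathNodes_cons_cons h.1, dst_rev]
      simp

theorem IsPath.rev {G : MixedGraph V} {p : List (Step V)} (h : IsPath G p) :
    IsPath G (revPath p) := by
  refine ⟨by simpa [revPath] using h.nonempty, ?_, ?_, ?_⟩
  · intro s hs
    simp only [revPath, List.mem_reverse, List.mem_map] at hs
    obtain ⟨t, ht, rfl⟩ := hs
    exact stepOK_rev (h.valid t ht)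
  · have hc := h.chain
    refine List.isChain_reverse.2 ?_
    refine (List.isChain_map _).2 ?_
    exact hc.imp (fun a b hab => hab.symm)
  · rw [pathNodes_revPath h.chain]
    exact List.nodup_reverse.2 h.nodup

theorem startsAt_rev {G : MixedGraph V} {p : List (Step V)} (h : IsPath G p) {b : V}
    (he : endsAt p b) : startsAt (revPath p) b := by
  rw [startsAt, pathNodes_revPath h.chain, List.head?_reverse]
  exact he

theorem endsAt_rev {G : MixedGraph V} {p : List (Step V)} (h : IsPath G p) {b : V}
    (he : startsAt p b) : endsAt (revPath p) b := by
  rw [endsAt, pathNodes_revPath h.chain, List.getLast?_reverse]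
  exact he

theorem blocked_rev {G : MixedGraph V} {p : List (Step V)} (h : IsPath G p) {C : Set V}
    (hb : blocked G (revPath p) C) : blocked G p C := by
  have key : ∀ l s t r, revPath p = l ++ s :: t :: r →
      p = revPath r ++ Step.rev t :: Step.rev s :: revPath l ∧ Step.dst s = Step.src t := by
    intro l s t r e
    constructor
    · rw [← revPath_revPath p, e]; simp [revPath]
    · have hc := h.rev.chain
      rw [e] at hc
      exact (List.isChain_cons_cons.1 (List.isChain_append.1 hc).2.1).1
  rcases hb with ⟨v, hv, hn⟩ | ⟨v, hc, ha⟩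
  · refine Or.inl ⟨v, hv, ?_⟩
    rw [nonColliderAt_iff h.rev.nodup] at hn
    rw [nonColliderAt_iff h.nodup]
    obtain ⟨l, s, t, r, e, hd, hh⟩ := hn
    obtain ⟨e', hst⟩ := key l s t r e
    refine ⟨_, _, _, _, e', by rw [dst_rev, ← hst, hd], ?_⟩
    rw [kind_rev, kind_rev, headAtDst_rev, headAtSrc_rev]
    exact fun hx => hh hx.symm
  · refine Or.inr ⟨v, ?_, ha⟩
    rw [colliderAt_iff] at hc ⊢
    obtain ⟨l, s, t, r, e, hd, hh⟩ := hc
    obtain ⟨e', hst⟩ := key l s t r e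
    refine ⟨_, _, _, _, e', by rw [dst_rev, ← hst, hd], ?_⟩
    rw [kind_rev, kind_rev, headAtDst_rev, headAtSrc_rev]
    exact hh.symm

theorem nonColl_ne_start {G : MixedGraph V} {p : List (Step V)} (h : IsPath G p) {a : V}
    (hs : startsAt p a) (hn : nonColliderAt p a) : False := by
  obtain ⟨l, s, t, r, e, hd⟩ := (mem_interior_iff p a).1 hn.1
  have hnd := h.nodup
  have hm : a ∈ p.map Step.dst := by rw [e]; simp [hd]
  cases p with
  | nil => simp at e
  | cons b p =>
    simp only [startsAt, pathNodes, List.head?_cons, Option.some.injEq] at hs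
    rw [← hs] at hm
    exact (List.nodup_cons.1 hnd).1 hm

theorem endsAt_append {q r : List (Step V)} (hr : r ≠ []) {a : V} :
    endsAt (q ++ r) a ↔ endsAt r a := by
  cases q with
  | nil => simp
  | cons b q =>
    cases r with
    | nil => exact absurd rfl hr
    | cons c r =>
      simp [endsAt, pathNodes, List.getLast?_cons]

theorem nonColl_ne_end {G : MixedGraph V} {p : List (Step V)} (h : IsPath G p) {b : V}
    (hs : endsAt p b) (hn : nonColliderAt p b) : False := by
  obtain ⟨l, s, t, r, e, hd⟩ := (mem_interior_iff p b).1 hn.1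
  have hnd := dst_nodup h.nodup
  have hm : b ∈ (t :: r).map Step.dst := by
    rw [e, List.append_cons, endsAt_append (by simp)] at hs
    rw [endsAt, pathNodes, List.map_cons, List.getLast?_cons_cons] at hs
    exact List.mem_of_getLast? hs
  rw [e, List.map_append, List.map_cons, hd] at hnd
  exact (List.nodup_cons.1 (List.nodup_append.1 hnd).2.1).1 hm

theorem split_at {G : MixedGraph V} {p : List (Step V)} (h : IsPath G p) {v : V}
    (hn : nonColliderAt p v) : ∃ q r, p = q ++ r ∧ q ≠ [] ∧ r ≠ [] ∧ endsAt q v ∧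
      startsAt r v := by
  obtain ⟨l, s, t, r, e, hd⟩ := (mem_interior_iff p v).1 hn.1
  refine ⟨l ++ [s], t :: r, by simp [e], by simp, by simp, ?_, ?_⟩
  · rw [endsAt]
    cases l with
    | nil => simp [pathNodes, hd]
    | cons a l => rw [pathNodes_concat (by simp)]; simp [hd]
  · have hc := h.chain
    rw [e] at hc
    have := (List.isChain_cons_cons.1 (List.isChain_append.1 hc).2.1).1
    simp [startsAt, pathNodes, ← this, hd]

theorem startsAt_append {q r : List (Step V)} (hq : q ≠ []) {a : V} :
    startsAt (q ++ r) a ↔ startsAt q a := by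
  cases q with
  | nil => exact absurd rfl hq
  | cons b q => simp [startsAt, pathNodes]

theorem pruneStep_valid {D : MixedGraph V} {X Y : V} {Z Z' : Set V}
    (hZ : validAdjDAG D {X} {Y} Z) (h : pruneStep D X Y Z Z') :
    validAdjDAG D {X} {Y} Z' := by
  obtain ⟨z, hz, hsep, rfl⟩ := h
  obtain ⟨h1, h2, h3⟩ := hZ
  refine ⟨?_, ?_, ?_⟩
  · rw [Set.eq_empty_iff_forall_notMem] at h1 ⊢
    exact fun v hv => h1 v ⟨hv.1.1, hv.2⟩
  · rw [Set.eq_empty_iff_forall_notMem] at h2 ⊢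
    exact fun v hv => h2 v ⟨hv.1.1, hv.2⟩
  · intro p hp hnc
    obtain ⟨hpath, ⟨a, ha, hs⟩, ⟨b, hb, he⟩, -⟩ := id hp
    obtain rfl : a = X := ha
    obtain rfl : b = Y := hb
    rcases blocked_mono (C := Z \ {z}) Set.sdiff_subset (h3 p hp hnc) with h | ⟨v, hv, hv', hn⟩
    · exact h
    obtain rfl : v = z := by
      by_contra hne
      exact hv' ⟨hv, hne⟩
    obtain ⟨q, r, rfl, hq, hr, -, hrs⟩ := split_at hpath hn
    have hrp : IsPath D r := hpath.right hr
    have hb := hsep (revPath r) b v rfl rfl hrp.rev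
      (startsAt_rev hrp ((endsAt_append hr).1 he)) (endsAt_rev hrp hrs)
    have hnd : (pathNodes (q ++ r ++ [])).Nodup := by simpa using hpath.nodup
    rcases blocked_mono (C := Z \ {v}) Set.subset_union_right (blocked_rev hrp hb) with
      h | ⟨w, hw, hw', hnw⟩
    · simpa using blocked_infix hnd hrp.nodup h
    · exfalso
      rcases hw with hw | hw
      · obtain rfl : w = a := hw
        have := nonColl_infix hnd hrp.nodup hnw
        rw [List.append_nil] at this
        exact nonColl_ne_start hpath hs this
      · exact hw' hw

theorem dSep_inter {D : MixedGraph V} {y z₁ z₂ : V} {A : Set V}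
    (h1 : dSep D {y} {z₁} (insert z₂ A)) (h2 : dSep D {y} {z₂} (insert z₁ A)) :
    dSep D {y} {z₂} A := by
  intro p a b ha hb hp hs he
  obtain rfl : a = y := ha
  obtain rfl : b = z₂ := hb
  rcases blocked_mono (C := A) (Set.subset_insert _ _) (h2 p a b rfl rfl hp hs he) with
    h | ⟨v, hv, hv', hn⟩
  · exact h
  obtain rfl : v = z₁ := hv.resolve_right hv'
  obtain ⟨q, r, rfl, hq, hr, hqe, -⟩ := split_at hp hn
  have hqp : IsPath D q := hp.left hq
  have hnd : (pathNodes ([] ++ q ++ r)).Nodup := hp.nodup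
  rcases blocked_mono (C := A) (Set.subset_insert _ _)
    (h1 q a v rfl rfl hqp ((startsAt_append hq).1 hs) hqe) with h | ⟨w, hw, hw', hnw⟩
  · exact blocked_infix hnd hqp.nodup h
  · obtain rfl : w = b := hw.resolve_right hw'
    exact (nonColl_ne_end hp he (nonColl_infix hnd hqp.nodup hnw)).elim

theorem prune_diamond {D : MixedGraph V} {X Y : V} {Z : Set V} {z₁ z₂ : V}
    (hne : z₁ ≠ z₂) (hz₁ : z₁ ∈ Z) (hz₂ : z₂ ∈ Z)
    (h1 : dSep D {Y} {z₁} ({X} ∪ (Z \ {z₁}))) (h2 : dSep D {Y} {z₂} ({X} ∪ (Z \ {z₂}))) :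
    pruneStep D X Y (Z \ {z₁}) ((Z \ {z₁}) \ {z₂}) := by
  refine ⟨z₂, ⟨hz₂, fun h => hne h.symm⟩, ?_, rfl⟩
  apply dSep_inter (z₁ := z₁)
  · convert h1 using 1
    ext v
    simp only [Set.mem_insert_iff, Set.mem_union, Set.mem_singleton_iff, Set.mem_sdiff]
    by_cases hv : v = z₂ <;> grind
  · convert h2 using 1
    ext v
    simp only [Set.mem_insert_iff, Set.mem_union, Set.mem_singleton_iff, Set.mem_sdiff]
    by_cases hv : v = z₁ <;> grind

theorem prune_normal {D : MixedGraph V} {X Y : V} {Z W : Set V}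
    (hn : ∀ z ∈ Z, ¬ dSep D {Y} {z} ({X} ∪ (Z \ {z})))
    (h : Relation.ReflTransGen (pruneStep D X Y) Z W) : Z = W := by
  rcases h.cases_head with h | ⟨c, ⟨z, hz, hs, -⟩, -⟩
  · exact h
  · exact (hn z hz hs).elim

end Causal

open Causal in
/-- Pruning a valid adjustment set `Z` relative to `({X},{Y})` in a
DAG `D` (repeatedly removing any `z ∈ Z'` with `Y ⟂ z ∣ {X} ∪ (Z' \ {z})`) yields a
valid adjustment set, and the result does not depend on the removal order. -/
theorem pruning_yields_valid_adjustment_and_is_order_independent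
    {V : Type*} [Fintype V] (D : MixedGraph V) (X Y : V) (Z : Set V)
    (hD : IsDAG D) (hXY : X ≠ Y)
    (hZ : validAdjDAG D {X} {Y} Z) :
    (∀ Z', pruneResult D X Y Z Z' → validAdjDAG D {X} {Y} Z') ∧
    (∀ Z₁ Z₂, pruneResult D X Y Z Z₁ → pruneResult D X Y Z Z₂ → Z₁ = Z₂) := by
  constructor
  · rintro Z' ⟨h, -⟩
    induction h with
    | refl => exact hZ
    | tail _ hs ih => exact pruneStep_valid ih hs
  · rintro Z₁ Z₂ ⟨h1, n1⟩ ⟨h2, n2⟩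
    have hj : Relation.Join (Relation.ReflTransGen (pruneStep D X Y)) Z₁ Z₂ := by
      refine Relation.church_rosser ?_ h1 h2
      rintro a b c ⟨u, hu, hsu, rfl⟩ ⟨w, hw, hsw, rfl⟩
      by_cases huw : u = w
      · subst huw
        exact ⟨_, Relation.ReflGen.refl, Relation.ReflTransGen.refl⟩
      · refine ⟨_, Relation.ReflGen.single (prune_diamond huw hu hw hsu hsw), ?_⟩
        rw [Set.sdiff_sdiff_comm]
        exact Relation.ReflTransGen.single
          (prune_diamond (fun h => huw h.symm) hw hu hsw hsu)
    obtain ⟨W, hW1, hW2⟩ := hj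
    exact (prune_normal n1 hW1).trans (prune_normal n2 hW2).symm
end
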